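/- Assume the Riemann Hypothesis. There exists an absolute constant C > 0 such that for all real r, x and all σ ∈ [0,1] with r > 1, ln x > ln r, and √(x/r) ≥ 2657, there exists ã ∈ [(1 − σ·ln r/(ln x + σ·ln r))², (1 + ln r/(ln x − ln r))²] with |N^{FIX}_{r,σ}(x) − ã·(4x/ln²x)·(σ·ln r + 1 − 2·r^{−(1−σ)/2} + 1/r)| ≤ C·x^{3/4}·r^{1/4}, where N^{FIX}_{r,σ}(x) = #{(p,q) : p, q prime, √(x/r) < p ≤ √(r^σ·x), √(x/r) < q ≤ √(r^σ·x), and p·q ≤ x}. -/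

import Mathlib

/-- Prime-pair count of the fixed-bound notion: ordered pairs of primes `(p,q)` with both
coordinates in `(√(x/r), √(r^σ·x)]` and `p·q ≤ x`. -/
noncomputable def NFIX (r σ x : ℝ) : ℕ :=
  Nat.card {pq : ℕ × ℕ // pq.1.Prime ∧ pq.2.Prime ∧
    Real.sqrt (x / r) < (pq.1 : ℝ) ∧ (pq.1 : ℝ) ≤ Real.sqrt (r ^ σ * x) ∧
    Real.sqrt (x / r) < (pq.2 : ℝ) ∧ (pq.2 : ℝ) ≤ Real.sqrt (r ^ σ * x) ∧
    (pq.1 : ℝ) * (pq.2 : ℝ) ≤ x}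

section

open Complex Set MeasureTheory Filter Topology Asymptotics

/-- fractional part on (1,∞) -/
noncomputable def frI : ℝ → ℂ := indicator (Ioi 1) (fun u => ((Int.fract u : ℝ) : ℂ))

lemma frI_meas : Measurable frI :=
  (Complex.measurable_ofReal.comp measurable_fract).indicator measurableSet_Ioi

lemma frI_norm_le (u : ℝ) : ‖frI u‖ ≤ 1 := by
  unfold frI
  by_cases h : u ∈ Ioi (1:ℝ)
  · rw [indicator_of_mem h, Complex.norm_real, Real.norm_of_nonneg (Int.fract_nonneg u)]
    exact (Int.fract_lt_one u).le
  · rw [indicator_of_notMem h]; simp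

lemma frI_locInt : LocallyIntegrableOn frI (Ioi 0) := by
  apply LocallyIntegrable.locallyIntegrableOn
  have h1 : LocallyIntegrable (fun _ : ℝ => (1:ℝ)) volume := locallyIntegrable_const 1
  refine h1.mono frI_meas.aestronglyMeasurable (ae_of_all _ fun u => ?_)
  simpa using frI_norm_le u

lemma frI_top : frI =O[atTop] (fun u : ℝ => u ^ (-(0:ℝ))) := by
  refine IsBigO.of_bound 1 (Eventually.of_forall fun u => ?_)
  simpa using frI_norm_le u

lemma frI_bot (b : ℝ) : frI =O[𝓝[>] 0] (fun u : ℝ => u ^ (-b)) := by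
  have : frI =ᶠ[𝓝[>] 0] (fun _ => 0) := by
    filter_upwards [Ioo_mem_nhdsGT (show (0:ℝ) < 1 by norm_num)] with u hu
    unfold frI
    rw [indicator_of_notMem]; simp [hu.2.le]
  exact this.trans_isBigO (isBigO_zero _ _)

noncomputable def HH (s : ℂ) : ℂ := mellin frI (-s)

lemma HH_diff {s : ℂ} (hs : 0 < s.re) : DifferentiableAt ℂ HH s := by
  have := mellin_differentiableAt_of_isBigO_rpow (s := -s) frI_locInt frI_top (by simpa using hs)
    (frI_bot (-s.re - 1)) (by simp)
  exact this.comp s differentiableAt_id.neg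

lemma HH_eq (s : ℂ) : HH s = ∫ u in Ioi (1:ℝ), (u:ℂ) ^ (-(s+1)) * ((Int.fract u : ℝ) : ℂ) := by
  unfold HH mellin frI
  have h : (fun t : ℝ => (t:ℂ) ^ (-s - 1) • indicator (Ioi 1) (fun u => ((Int.fract u : ℝ) : ℂ)) t)
     = indicator (Ioi 1) (fun t : ℝ => (t:ℂ) ^ (-(s+1)) * ((Int.fract t : ℝ) : ℂ)) := by
    ext t
    by_cases h : t ∈ Ioi (1:ℝ)
    · simp only [indicator_of_mem h, smul_eq_mul]; congr 1; ring_nf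
    · simp only [indicator_of_notMem h]; simp
  rw [h, setIntegral_indicator measurableSet_Ioi]
  congr 2
  ext u; simp

lemma HH_norm {s : ℂ} (hs : 0 < s.re) : ‖HH s‖ ≤ 1 / s.re := by
  rw [HH_eq]
  have hi : IntegrableOn (fun u : ℝ => u ^ (-s.re - 1)) (Ioi 1) :=
    integrableOn_Ioi_rpow_of_lt (by linarith) one_pos
  calc _ ≤ ∫ u in Ioi (1:ℝ), u ^ (-s.re - 1) := by
        refine norm_integral_le_of_norm_le hi ?_
        filter_upwards [ae_restrict_mem measurableSet_Ioi] with u hu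
        have hu0 : (0:ℝ) < u := lt_trans one_pos hu
        rw [norm_mul, Complex.norm_cpow_eq_rpow_re_of_pos hu0, Complex.norm_real,
          Real.norm_of_nonneg (Int.fract_nonneg u)]
        have : (-(s+1)).re = -s.re - 1 := by simp; ring
        rw [this]
        have := (Int.fract_lt_one u).le
        have h2 := Real.rpow_nonneg hu0.le (-s.re-1)
        nlinarith
    _ = 1 / s.re := by
        rw [integral_Ioi_rpow_of_lt (by linarith) one_pos]
        simp
        
lemma cpow_int {s : ℂ} (hs : 0 < s.re) : IntegrableOn (fun u : ℝ => (u:ℂ) ^ (-(s+1))) (Ioi 1) :=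
  integrableOn_Ioi_cpow_of_lt (by simp; linarith) one_pos

lemma HH_zeta {s : ℂ} (hs : 1 < s.re) : (s - 1) * riemannZeta s = s - s * (s - 1) * HH s := by
  have h1 : LSeries 1 s = s * ∫ t in Set.Ioi (1 : ℝ), (∑ k ∈ Finset.Icc 1 ⌊t⌋₊, (1 : ℕ → ℂ) k) * t ^ (-(s + 1)) := by
    apply LSeries_eq_mul_integral' _ zero_le_one hs
    refine IsBigO.of_bound 1 (Eventually.of_forall fun n => ?_)
    simp
  rw [LSeries_one_eq_riemannZeta hs] at h1
  have h2 : ∫ t in Set.Ioi (1 : ℝ), (∑ k ∈ Finset.Icc 1 ⌊t⌋₊, (1 : ℕ → ℂ) k) * (t:ℂ) ^ (-(s + 1))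
     = (∫ t in Ioi (1:ℝ), (t:ℂ) ^ (-s)) - HH s := by
    rw [HH_eq, ← integral_sub]
    · refine setIntegral_congr_fun measurableSet_Ioi fun t ht => ?_
      have ht0 : (0:ℝ) < t := lt_trans one_pos ht
      have e1 : (t:ℂ) ^ (-s) = t * (t:ℂ) ^ (-(s+1)) := by
        rw [show -s = -(s+1) + 1 by ring, cpow_add _ _ (by exact_mod_cast ht0.ne'), cpow_one]; ring
      simp only [e1, Pi.one_apply, Finset.sum_const, Nat.card_Icc, add_tsub_cancel_right, nsmul_eq_mul, mul_one]
      have : ((Int.fract t : ℝ) : ℂ) = t - (⌊t⌋₊ : ℂ) := by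
        rw [← Complex.ofReal_natCast, natCast_floor_eq_intCast_floor ht0.le, Int.fract]
        push_cast; ring
      rw [this]; ring
    · exact integrableOn_Ioi_cpow_of_lt (by simpa using hs) one_pos
    · refine (cpow_int (s := s) (by linarith)).mul_bdd (c := 1) ?_ (ae_of_all _ fun u => ?_)
      · exact (Complex.measurable_ofReal.comp measurable_fract).aestronglyMeasurable
      · rw [Complex.norm_real, Real.norm_of_nonneg (Int.fract_nonneg u)]
        exact (Int.fract_lt_one u).le
  rw [h2, integral_Ioi_cpow_of_lt (by simpa using hs) one_pos] at h1
  have hs1 : s - 1 ≠ 0 := by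
    intro h; rw [sub_eq_zero] at h; rw [h] at hs; simp at hs
  have hs2 : -s + 1 ≠ 0 := by intro h; apply hs1; linear_combination -h
  rw [h1]
  simp only [ofReal_one, one_cpow]
  field_simp
  ring

noncomputable def ZZ (s : ℂ) : ℂ := s - s * (s - 1) * HH s

lemma ZZ_diff {s : ℂ} (hs : 0 < s.re) : DifferentiableAt ℂ ZZ s := by
  have := HH_diff hs
  unfold ZZ
  fun_prop

lemma ZZ_one : ZZ 1 = 1 := by simp [ZZ]

lemma ZZ_eq {s : ℂ} (hs : 0 < s.re) (h1 : s ≠ 1) : (s - 1) * riemannZeta s = ZZ s := by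
  set U : Set ℂ := {z | 0 < z.re} \ {1} with hU
  have hUo : IsOpen U := (isOpen_lt continuous_const continuous_re).sdiff isClosed_singleton
  have hconv : Convex ℝ {z : ℂ | 0 < z.re} := convex_halfSpace_re_gt 0
  have hpre : IsPreconnected U := by
    have c1 : Convex ℝ {z : ℂ | 0 < z.re ∧ 0 < z.im} :=
      (convex_halfSpace_re_gt 0).inter (convex_halfSpace_im_gt 0)
    have c2 : Convex ℝ {z : ℂ | 0 < z.re ∧ z.im < 0} :=
      (convex_halfSpace_re_gt 0).inter (convex_halfSpace_im_lt 0)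
    have c3 : Convex ℝ {z : ℂ | 1 < z.re} := convex_halfSpace_re_gt 1
    have c4 : Convex ℝ {z : ℂ | 0 < z.re ∧ z.re < 1} :=
      (convex_halfSpace_re_gt 0).inter (convex_halfSpace_re_lt 1)
    have u1 := c1.isPreconnected.union (2 + I) (by simp) (by simp) c3.isPreconnected
    have u2 := u1.union (2 - I) (by simp) (by simp) c2.isPreconnected
    have u3 := u2.union (1/2 + I) (by simp) (by constructor <;> norm_num) c4.isPreconnected
    convert u3 using 1
    ext z
    simp only [hU, Set.mem_sdiff, mem_ofPred_eq, mem_singleton_iff, mem_union, Complex.ext_iff, one_re, one_im]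
    constructor
    · rintro ⟨h, h'⟩
      rcases lt_trichotomy z.im 0 with h1 | h1 | h1
      · tauto
      · rcases lt_trichotomy z.re 1 with h2 | h2 | h2 <;> tauto
      · tauto
    · rintro (((h | h) | h) | h)
      · exact ⟨h.1, fun h' => h.2.ne' h'.2⟩
      · exact ⟨by linarith, fun h' => h.ne' h'.1⟩
      · exact ⟨h.1, fun h' => h.2.ne h'.2⟩
      · exact ⟨h.1, fun h' => h.2.ne h'.1⟩
  have hf : AnalyticOnNhd ℂ (fun s => (s - 1) * riemannZeta s) U := by
    apply DifferentiableOn.analyticOnNhd _ hUo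
    intro z hz
    have := differentiableAt_riemannZeta (s := z) hz.2
    exact ((differentiableAt_id.sub_const 1).mul this).differentiableWithinAt
  have hg : AnalyticOnNhd ℂ ZZ U := by
    apply DifferentiableOn.analyticOnNhd _ hUo
    intro z hz
    exact (ZZ_diff hz.1).differentiableWithinAt
  have h2 : (2:ℂ) ∈ U := by simp [hU]
  refine hf.eqOn_of_preconnected_of_eventuallyEq hg hpre h2 ?_ ⟨hs, h1⟩
  have : {z : ℂ | 1 < z.re} ∈ 𝓝 (2:ℂ) := (isOpen_lt continuous_const continuous_re).mem_nhds (by simp)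
  filter_upwards [this] with z hz
  exact HH_zeta hz

lemma ZZ_norm {s : ℂ} (hs : 1/2 ≤ s.re) : ‖ZZ s‖ ≤ ‖s‖ + 2 * ‖s‖ * ‖s - 1‖ := by
  have h := HH_norm (s := s) (by linarith)
  have h2 : 1 / s.re ≤ 2 := by
    rw [div_le_iff₀ (by linarith)]; linarith
  unfold ZZ
  calc _ ≤ ‖s‖ + ‖s * (s - 1) * HH s‖ := norm_sub_le _ _
    _ = ‖s‖ + ‖s‖ * ‖s-1‖ * ‖HH s‖ := by rw [norm_mul, norm_mul]
    _ ≤ ‖s‖ + ‖s‖ * ‖s-1‖ * 2 := by gcongr; linarith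
    _ = _ := by ring

lemma ZZ_ne_zero (hRH : RiemannHypothesis) {s : ℂ} (hs : 1/2 < s.re) : ZZ s ≠ 0 := by
  by_cases h1 : s = 1
  · rw [h1, ZZ_one]; exact one_ne_zero
  rw [← ZZ_eq (by linarith) h1]
  refine mul_ne_zero (sub_ne_zero.2 h1) fun h0 => ?_
  have := hRH s h0 ?_ h1
  · linarith
  · rintro ⟨n, hn⟩
    rw [hn] at hs
    norm_num at hs
    have : (0:ℝ) ≤ n := n.cast_nonneg
    linarith

end

section

open Complex Set MeasureTheory Filter Topology Asymptotics

lemma zeta_two_lower (t : ℝ) : 1/3 ≤ ‖riemannZeta (2 + t * I)‖ := by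
  set s : ℂ := 2 + t * I with hsdef
  have hre : s.re = 2 := by simp [hsdef]
  have hs : 1 < s.re := by rw [hre]; norm_num
  have hz := zeta_eq_tsum_one_div_nat_add_one_cpow hs
  have hn : ∀ n : ℕ, ‖1 / ((n:ℂ) + 1) ^ s‖ = 1 / ((n:ℝ)+1)^2 := by
    intro n
    have : ((n:ℂ)+1) = (((n:ℝ)+1 : ℝ) : ℂ) := by push_cast; rfl
    rw [norm_div, this, Complex.norm_cpow_eq_rpow_re_of_pos (by positivity), hre]
    norm_num
  have hb := hasSum_zeta_two
  have hb' : HasSum (fun n : ℕ => 1 / ((n:ℝ)+1)^2) (Real.pi^2/6) := by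
    have := (hasSum_nat_add_iff' 1).2 hb
    simpa using this
  have hsum : Summable (fun n : ℕ => 1 / ((n:ℂ) + 1) ^ s) := by
    apply Summable.of_norm
    simp_rw [hn]; exact hb'.summable
  rw [hsum.tsum_eq_zero_add] at hz
  have h1 : HasSum (fun n : ℕ => 1 / (((n+1:ℕ):ℝ)+1)^2) (Real.pi^2/6 - 1) := by
    have := (hasSum_nat_add_iff' 1).2 hb'
    simpa using this
  have h2 : ‖∑' n : ℕ, 1 / (((n+1:ℕ):ℂ) + 1) ^ s‖ ≤ Real.pi^2/6 - 1 := by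
    refine tsum_of_norm_bounded h1 fun n => (hn (n+1)).le
  have hpi : Real.pi^2/6 - 1 ≤ 2/3 := by
    have := Real.pi_lt_d2
    have := Real.pi_pos
    nlinarith
  rw [hz]
  have h3 : (1:ℂ) / (((0:ℕ):ℂ) + 1) ^ s = 1 := by simp
  rw [h3]
  have := norm_sub_le_norm_add (1:ℂ) (∑' n : ℕ, 1 / (((n+1:ℕ):ℂ) + 1) ^ s)
  rw [norm_one] at this
  linarith

lemma exists_log {f : ℂ → ℂ} {c : ℂ} {R : ℝ} (hR : 0 < R)
    (hf : DifferentiableOn ℂ f (Metric.ball c R))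
    (h0 : ∀ z ∈ Metric.ball c R, f z ≠ 0) :
    ∃ g : ℂ → ℂ, g c = 0 ∧ (∀ z ∈ Metric.ball c R, HasDerivAt g (deriv f z / f z) z) ∧
      ∀ z ∈ Metric.ball c R, f z = f c * exp (g z) := by
  have hd : DifferentiableOn ℂ (fun z => deriv f z / f z) (Metric.ball c R) :=
    (hf.deriv Metric.isOpen_ball).div hf h0
  obtain ⟨g, hg0, hg⟩ := hd.isExactOn_ball.with_val_at c 0
  refine ⟨g, hg0, hg, fun z hz => ?_⟩
  have hc : c ∈ Metric.ball c R := Metric.mem_ball_self hR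
  have hk : ∀ w ∈ Metric.ball c R, HasDerivAt (fun z => f z * exp (- g z)) 0 w := by
    intro w hw
    have h1 := (hf.differentiableAt (Metric.isOpen_ball.mem_nhds hw)).hasDerivAt
    have h2 := (hg w hw).fun_neg.cexp
    have h3 := h1.fun_mul h2
    have hne := h0 w hw
    have e : f w * (exp (- g w) * -(deriv f w / f w)) = - (deriv f w * exp (- g w)) := by
      field_simp
    rw [e, add_neg_cancel] at h3
    exact h3
  have hconst := (convex_ball c R).is_const_of_fderivWithin_eq_zero (𝕜 := ℂ)
    (f := fun z => f z * exp (- g z)) (fun w hw => (hk w hw).differentiableAt.differentiableWithinAt)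
    (fun w hw => by
      rw [fderivWithin_of_isOpen Metric.isOpen_ball hw]
      have := (hk w hw).hasFDerivAt.fderiv
      rw [this]; ext; simp) hz hc
  simp only [hg0, neg_zero, exp_zero, mul_one] at hconst
  rw [← hconst, mul_assoc, ← exp_add]; simp

lemma logderiv_bound (hRH : RiemannHypothesis) {s : ℂ} (h1 : 0.55 ≤ s.re) (h2 : s.re ≤ 2) :
    ‖deriv ZZ s / ZZ s‖ ≤ 9800 * Real.log (9 * (|s.im| + 5)^2) := by
  set c : ℂ := 2 + s.im * I with hc
  have hcre : c.re = 2 := by simp [hc]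
  have hcim : c.im = s.im := by simp [hc]
  have hball : ∀ z ∈ Metric.ball c (3/2), 1/2 < z.re := by
    intro z hz
    rw [Metric.mem_ball, dist_eq_norm] at hz
    have := abs_re_le_norm (z - c)
    rw [sub_re, hcre] at this
    have := neg_abs_le (z.re - 2)
    linarith
  obtain ⟨g, hg0, hg, hge⟩ := exists_log (f := ZZ) (c := c) (R := 3/2) (by norm_num)
    (fun z hz => (ZZ_diff (by linarith [hball z hz])).differentiableWithinAt)
    (fun z hz => ZZ_ne_zero hRH (hball z hz))
  set M := Real.log (9 * (|s.im| + 5)^2) with hM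
  have habs := abs_nonneg s.im
  have hMpos : 0 < M := by
    apply Real.log_pos; nlinarith
  have hZc : 1/3 ≤ ‖ZZ c‖ := by
    have hc1 : c ≠ 1 := by intro h; rw [h] at hcre; norm_num at hcre
    rw [← ZZ_eq (by rw [hcre]; norm_num) hc1, norm_mul]
    have := zeta_two_lower s.im
    rw [← hc] at this
    have h3 : 1 ≤ ‖c - 1‖ := by
      have := abs_re_le_norm (c - 1)
      rw [sub_re, hcre, one_re] at this
      norm_num at this; exact this
    nlinarith
  have hre : ∀ z ∈ Metric.ball c (3/2), (g z).re ≤ M := by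
    intro z hz
    have hz2 := hball z hz
    have e := hge z hz
    have e2 : ‖ZZ z‖ = ‖ZZ c‖ * Real.exp (g z).re := by rw [e, norm_mul, norm_exp]
    rw [Metric.mem_ball, dist_eq_norm] at hz
    have hcn : ‖c‖ ≤ 2 + |s.im| := by
      refine (norm_add_le _ _).trans ?_
      simp
    have hzn : ‖z‖ ≤ |s.im| + 7/2 := by
      have : z = (z - c) + c := by ring
      rw [this]
      refine (norm_add_le _ _).trans ?_
      linarith
    have hzn1 : ‖z - 1‖ ≤ |s.im| + 9/2 := by
      refine (norm_sub_le _ _).trans ?_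
      rw [norm_one]; linarith
    have hZ := ZZ_norm (s := z) hz2.le
    have hZ2 : ‖ZZ z‖ ≤ 3 * (|s.im| + 5)^2 := by
      have : ‖z‖ * ‖z-1‖ ≤ (|s.im| + 7/2) * (|s.im| + 9/2) := by gcongr
      nlinarith
    have h4 : Real.exp (g z).re ≤ 9 * (|s.im| + 5)^2 := by
      have := Real.exp_pos (g z).re
      nlinarith
    rw [hM, Real.le_log_iff_exp_le (by positivity)]
    exact h4
  have hBC : ∀ z ∈ Metric.ball c 1.47, ‖g z‖ ≤ 98 * M := by
    intro z hz
    rw [Metric.mem_ball, dist_eq_norm] at hz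
    have hmap : ∀ w ∈ Metric.ball (0:ℂ) (3/2), c + w ∈ Metric.ball c (3/2) := by
      intro w hw; simpa using hw
    have hBC := borelCaratheodory_zero (f := fun w => g (c + w)) (R := 3/2) (M := M) (z := z - c)
      hMpos (fun w hw => by
        have := (hg _ (hmap w hw)).differentiableAt
        exact (this.comp w (differentiableAt_id.const_add c)).differentiableWithinAt)
      (fun w hw => hre _ (hmap w hw)) (by norm_num) (by simp; linarith) (by simpa using hg0)
    simp only [add_sub_cancel] at hBC
    refine hBC.trans ?_
    rw [div_le_iff₀ (by linarith)]
    nlinarith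
  have hsd : ‖s - c‖ ≤ 1.45 := by
    have : s - c = ((s.re - 2 : ℝ) : ℂ) := by
      apply Complex.ext <;> simp [hcre, hcim]
    rw [this, Complex.norm_real, Real.norm_eq_abs, abs_le]; constructor <;> linarith
  have hsb : s ∈ Metric.ball c (3/2) := by
    rw [Metric.mem_ball, dist_eq_norm]; linarith
  have hder := (hg s hsb).deriv
  rw [← hder]
  have hcl : Metric.closedBall s 0.01 ⊆ Metric.ball c (3/2) := by
    intro w hw
    rw [Metric.mem_closedBall] at hw
    rw [Metric.mem_ball]
    have := dist_triangle w s c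
    rw [dist_eq_norm s c] at this; linarith
  have := norm_deriv_le_of_forall_mem_sphere_norm_le (f := g) (c := s) (R := 0.01) (C := 98 * M)
    (by norm_num) (by
      apply DifferentiableOn.diffContOnCl
      rw [closure_ball _ (by norm_num)]
      intro w hw
      exact (hg w (hcl hw)).differentiableAt.differentiableWithinAt)
    (fun w hw => hBC w (by
      rw [mem_sphere_iff_norm] at hw
      rw [Metric.mem_ball, dist_eq_norm]
      have : w - c = (w - s) + (s - c) := by ring
      rw [this]
      refine (norm_add_le _ _).trans_lt ?_
      linarith))
  refine this.trans (le_of_eq ?_)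
  ring

lemma logderiv_bound' (hRH : RiemannHypothesis) : ∃ C : ℝ, 0 < C ∧ ∀ s : ℂ, 0.55 ≤ s.re → s.re ≤ 2 →
    ‖deriv ZZ s / ZZ s‖ ≤ C * (1 + |s.im|) ^ (1/20 : ℝ) := by
  refine ⟨9800 * (2 * (20 * 15 ^ (1/20:ℝ))), by positivity, fun s h1 h2 => ?_⟩
  refine (logderiv_bound hRH h1 h2).trans ?_
  have habs := abs_nonneg s.im
  have e1 : Real.log (9 * (|s.im| + 5)^2) ≤ 2 * Real.log (15 * (1 + |s.im|)) := by
    rw [← Real.log_rpow (by positivity)]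
    apply Real.log_le_log (by positivity)
    norm_num
    nlinarith
  have e2 := Real.log_le_rpow_div (x := 15 * (1 + |s.im|)) (ε := 1/20) (by positivity) (by norm_num)
  rw [Real.mul_rpow (by norm_num) (by positivity)] at e2
  rw [mul_assoc, mul_assoc]
  gcongr
  refine e1.trans ?_
  rw [mul_assoc]
  gcongr
  refine e2.trans (le_of_eq ?_)
  ring

end

section

open Complex Set MeasureTheory Filter Topology Asymptotics

noncomputable def dr (v : ℝ) : ℝ := Chebyshev.psi v - v
noncomputable def LL (s : ℂ) : ℂ := deriv ZZ s / ZZ s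

lemma psi_bd {v : ℝ} (hv : 0 ≤ v) : Chebyshev.psi v ≤ (Real.log 4 + 4) * v :=
  Chebyshev.psi_le_const_mul_self hv

lemma dr_meas : Measurable dr := Chebyshev.psi_mono.measurable.sub measurable_id

lemma dr_bound {v : ℝ} (hv : 0 ≤ v) : |dr v| ≤ 7 * v := by
  have h := psi_bd hv
  have h1 := Chebyshev.psi_nonneg v
  have h4 : Real.log 4 < 2 := by
    rw [show (4:ℝ) = 2^2 by norm_num, Real.log_pow]
    have := Real.log_two_lt_d9; push_cast; linarith
  unfold dr
  rw [abs_le]; constructor <;> nlinarith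

lemma cpow_re_norm {u : ℝ} (hu : 0 < u) (s : ℂ) : ‖(u:ℂ)^s‖ = u ^ s.re :=
  Complex.norm_cpow_eq_rpow_re_of_pos hu s

lemma dr_int {s : ℂ} (hs : 1 < s.re) :
    IntegrableOn (fun v : ℝ => (dr v : ℂ) * (v:ℂ)^(-(s+1))) (Ioi 1) := by
  have h := (cpow_int (s := s - 1) (by simpa using hs)).norm.const_mul 7
  refine Integrable.mono' h ?_ ?_
  · refine AEStronglyMeasurable.mul (Complex.measurable_ofReal.comp dr_meas).aestronglyMeasurable ?_
    apply Measurable.aestronglyMeasurable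
    fun_prop
  · filter_upwards [ae_restrict_mem measurableSet_Ioi] with v hv
    have hv0 : (0:ℝ) < v := lt_trans one_pos hv
    rw [norm_mul, Complex.norm_real, Real.norm_eq_abs, cpow_re_norm hv0, cpow_re_norm hv0]
    have e : (-(s - 1 + 1)).re = (-(s+1)).re + 1 := by simp
    rw [e, Real.rpow_add_one hv0.ne']
    have := dr_bound hv0.le
    have h2 : (0:ℝ) ≤ v ^ (-(s+1)).re := by positivity
    nlinarith

lemma LL_eq {s : ℂ} (hs : 1 < s.re) :
    LL s = 1 / (s - 1) + deriv riemannZeta s / riemannZeta s := by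
  have h1 : s ≠ 1 := by rintro rfl; simp at hs
  have hz : riemannZeta s ≠ 0 := riemannZeta_ne_zero_of_one_lt_re hs
  have hs1 : s - 1 ≠ 0 := sub_ne_zero.mpr h1
  have hev : ZZ =ᶠ[𝓝 s] fun z => (z - 1) * riemannZeta z := by
    have : {z : ℂ | 0 < z.re} \ {1} ∈ 𝓝 s :=
      ((isOpen_lt continuous_const continuous_re).sdiff isClosed_singleton).mem_nhds
        ⟨by simp; linarith, h1⟩
    filter_upwards [this] with z hz
    exact (ZZ_eq hz.1 hz.2).symm
  have hd : HasDerivAt (fun z => (z - 1) * riemannZeta z)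
      (1 * riemannZeta s + (s - 1) * deriv riemannZeta s) s :=
    ((hasDerivAt_id s).sub_const 1).mul (differentiableAt_riemannZeta h1).hasDerivAt
  unfold LL
  rw [hev.deriv_eq, hd.deriv, hev.eq_of_nhds]
  field_simp

lemma mell0 {s : ℂ} (hs : 1 < s.re) :
    ∫ v in Ioi (1:ℝ), (dr v : ℂ) * (v:ℂ)^(-(s+1)) = (- LL s - 1) / s := by
  have hs0 : s ≠ 0 := by rintro rfl; simp at hs; linarith
  have hs1 : s - 1 ≠ 0 := by intro h; rw [sub_eq_zero] at h; rw [h] at hs; simp at hs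
  have hO : (fun n : ℕ ↦ ∑ k ∈ Finset.Icc 1 n, ArithmeticFunction.vonMangoldt k) =O[atTop] fun n ↦ (n : ℝ) ^ (1:ℝ) := by
    refine IsBigO.of_bound (Real.log 4 + 4) (Eventually.of_forall fun n => ?_)
    have h := psi_bd (v := n) (by positivity)
    have h1 := Chebyshev.psi_nonneg n
    rw [Chebyshev.psi, Nat.floor_natCast] at h h1
    rw [Real.rpow_one]
    have e : Finset.Icc 1 n = Finset.Ioc 0 n := by ext; simp [Nat.lt_iff_add_one_le]
    rw [e, Real.norm_of_nonneg h1, Real.norm_of_nonneg (by positivity)]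
    exact h
  have h := LSeries_eq_mul_integral_of_nonneg _ zero_le_one hs hO
    (fun n => ArithmeticFunction.vonMangoldt_nonneg)
  rw [ArithmeticFunction.LSeries_vonMangoldt_eq_deriv_riemannZeta_div hs] at h
  have e1 : ∀ t : ℝ, (∑ k ∈ Finset.Icc 1 ⌊t⌋₊, (ArithmeticFunction.vonMangoldt k : ℂ)) = (Chebyshev.psi t : ℂ) := by
    intro t
    have e : Finset.Icc 1 ⌊t⌋₊ = Finset.Ioc 0 ⌊t⌋₊ := by ext; simp [Nat.lt_iff_add_one_le]
    rw [e, Chebyshev.psi]; push_cast; rfl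
  simp only [e1] at h
  have hint2 := cpow_int (s := s - 1) (by simpa using hs)
  have e2 : ∫ v in Ioi (1:ℝ), (v:ℂ)^(-(s-1+1)) = 1 / (s-1) := by
    rw [integral_Ioi_cpow_of_lt (by simpa using hs) one_pos]
    simp
    rw [show -s+1 = -(s-1) by ring, neg_div_neg_eq, one_div]
  have e3 : ∀ v ∈ Ioi (1:ℝ), (Chebyshev.psi v : ℂ) * (v:ℂ)^(-(s+1)) =
      (dr v : ℂ) * (v:ℂ)^(-(s+1)) + (v:ℂ)^(-(s-1+1)) := by
    intro v hv
    have hv0 : (v:ℂ) ≠ 0 := by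
      have : (0:ℝ) < v := lt_trans one_pos hv
      exact_mod_cast this.ne'
    have : (v:ℂ)^(-(s-1+1)) = (v:ℂ)^(-(s+1)) * v := by
      rw [show -(s-1+1) = -(s+1) + 1 by ring, cpow_add _ _ hv0, cpow_one] 
    rw [this]; unfold dr; push_cast; ring
  rw [setIntegral_congr_fun measurableSet_Ioi e3, integral_add (dr_int hs) hint2, e2] at h
  rw [LL_eq hs, eq_div_iff hs0]
  have h' : (∫ v in Ioi (1:ℝ), (dr v : ℂ) * (v:ℂ)^(-(s+1))) * s =
     - deriv riemannZeta s / riemannZeta s - s * (1 / (s-1)) := by rw [h]; ring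
  rw [h']
  field_simp
  ring

end

section

open Complex Set MeasureTheory Filter Topology Asymptotics

noncomputable def D1 (x : ℝ) : ℝ := ∫ v in (1:ℝ)..x, dr v
noncomputable def D1C (x : ℝ) : ℂ := if 1 < x then (D1 x : ℂ) else 0

lemma dr_ii (a b : ℝ) : IntervalIntegrable dr volume a b :=
  (Chebyshev.psi_mono.intervalIntegrable).sub (continuous_id.intervalIntegrable a b)

lemma D1C_cont : Continuous D1 := by
  apply intervalIntegral.continuous_primitive
  exact dr_ii

lemma fub_int {s : ℂ} (hs : 1 < s.re) :
    Integrable (fun p : ℝ × ℝ => if p.1 < p.2 then (dr p.1 : ℂ) * (p.2:ℂ)^(-(s+1+1)) else 0)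
      ((volume.restrict (Ioi (1:ℝ))).prod (volume.restrict (Ioi (1:ℝ)))) := by
  have hmeas : Measurable (fun p : ℝ × ℝ => if p.1 < p.2 then (dr p.1 : ℂ) * (p.2:ℂ)^(-(s+1+1)) else 0) := by
    refine Measurable.ite (measurableSet_lt measurable_fst measurable_snd) ?_ measurable_const
    have := dr_meas
    fun_prop
  rw [integrable_prod_iff hmeas.aestronglyMeasurable]
  have hr : ∀ v u : ℝ, (if v < u then (dr v : ℂ) * (u:ℂ)^(-(s+1+1)) else 0) =
      (Ioi v).indicator (fun u => (dr v : ℂ) * (u:ℂ)^(-(s+1+1))) u := fun v u => by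
        simp [indicator]
  have hb : IntegrableOn (fun u : ℝ => (u:ℂ)^(-(s+1+1))) (Ioi 1) :=
    cpow_int (s := s + 1) (by simp; linarith)
  constructor
  · refine ae_of_all _ fun v => ?_
    simp only [hr]
    exact (hb.const_mul _).indicator measurableSet_Ioi
  · have h := (dr_int hs).norm.mul_const (1 / (s.re+1))
    refine h.congr ?_
    filter_upwards [ae_restrict_mem measurableSet_Ioi] with v hv
    have hv' : (1:ℝ) < v := hv
    simp only [hr, norm_indicator_eq_indicator_norm]
    rw [setIntegral_indicator measurableSet_Ioi, Ioi_inter_Ioi, sup_of_le_right hv'.le]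
    have e : ∀ u ∈ Ioi v, ‖(dr v : ℂ) * (u:ℂ)^(-(s+1+1))‖ = ‖(dr v : ℂ)‖ * u ^ (-(s.re + 1 + 1)) := by
      intro u hu
      rw [norm_mul, cpow_re_norm (by linarith [mem_Ioi.mp hu])]
      simp
    rw [setIntegral_congr_fun measurableSet_Ioi e, integral_const_mul,
      integral_Ioi_rpow_of_lt (by linarith) (by linarith), norm_mul, cpow_re_norm (by linarith)]
    rw [show -(s.re+1+1)+1 = -(s.re+1) by ring, div_neg, neg_div, neg_neg]
    simp
    ring

lemma mell1 {s : ℂ} (hs : 1 < s.re) :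
    ∫ u in Ioi (1:ℝ), (D1 u : ℂ) * (u:ℂ)^(-(s+1+1)) = (- LL s - 1) / (s * (s+1)) := by
  have hs1 : s + 1 ≠ 0 := by
    intro h; have := congrArg re h; simp at this; linarith
  have hs0 : s ≠ 0 := by rintro rfl; simp at hs; linarith
  have h := integral_integral_swap (f := fun (v u : ℝ) => if v < u then (dr v : ℂ) * (u:ℂ)^(-(s+1+1)) else 0) (fub_int hs)
  have e1 : ∀ u ∈ Ioi (1:ℝ), ∫ v in Ioi (1:ℝ), (if v < u then (dr v : ℂ) * (u:ℂ)^(-(s+1+1)) else 0)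
      = (D1 u : ℂ) * (u:ℂ)^(-(s+1+1)) := by
    intro u hu
    have hu' : (1:ℝ) ≤ u := le_of_lt hu
    have : ∀ v : ℝ, (if v < u then (dr v : ℂ) * (u:ℂ)^(-(s+1+1)) else 0) =
      (Iio u).indicator (fun v => (dr v : ℂ) * (u:ℂ)^(-(s+1+1))) v := fun v => by
        simp [indicator]
    simp only [this]
    rw [setIntegral_indicator measurableSet_Iio, Ioi_inter_Iio, ← integral_Ioc_eq_integral_Ioo,
      ← intervalIntegral.integral_of_le hu', intervalIntegral.integral_mul_const, D1,
      intervalIntegral.integral_ofReal]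
  have e2 : ∀ v ∈ Ioi (1:ℝ), ∫ u in Ioi (1:ℝ), (if v < u then (dr v : ℂ) * (u:ℂ)^(-(s+1+1)) else 0)
      = (dr v : ℂ) * (v:ℂ)^(-(s+1)) * (1 / (s+1)) := by
    intro v hv
    have hv' : (1:ℝ) < v := hv
    have : ∀ u : ℝ, (if v < u then (dr v : ℂ) * (u:ℂ)^(-(s+1+1)) else 0) =
      (Ioi v).indicator (fun u => (dr v : ℂ) * (u:ℂ)^(-(s+1+1))) u := fun u => by
        simp [indicator]
    simp only [this]
    rw [setIntegral_indicator measurableSet_Ioi, Ioi_inter_Ioi, sup_of_le_right hv'.le,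
      integral_const_mul, integral_Ioi_cpow_of_lt (by simp; linarith) (by linarith)]
    rw [show -(s+1+1)+1 = -(s+1) by ring, div_neg, neg_div, neg_neg]
    ring
  rw [setIntegral_congr_fun measurableSet_Ioi e2, integral_mul_const, mell0 hs] at h
  rw [← setIntegral_congr_fun measurableSet_Ioi e1, ← h]
  field_simp

end

section

open Complex Set MeasureTheory Filter Topology Asymptotics

noncomputable def GG (s : ℂ) : ℂ := (- LL s - 1) / (s * (s+1))

lemma GG_diff (hRH : RiemannHypothesis) {s : ℂ} (hs : 1/2 < s.re) : DifferentiableAt ℂ GG s := by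
  have hopen : IsOpen {z : ℂ | 0 < z.re} := isOpen_lt continuous_const continuous_re
  have hd : DifferentiableOn ℂ ZZ {z : ℂ | 0 < z.re} := fun z hz => (ZZ_diff hz).differentiableWithinAt
  have hmem : s ∈ {z : ℂ | 0 < z.re} := by simp; linarith
  have h1 : DifferentiableAt ℂ (deriv ZZ) s := (hd.deriv hopen).differentiableAt (hopen.mem_nhds hmem)
  have h2 : DifferentiableAt ℂ LL s := h1.div (ZZ_diff hmem) (ZZ_ne_zero hRH hs)
  have hs0 : s ≠ 0 := by rintro rfl; simp at hs; linarith
  have hs1 : s + 1 ≠ 0 := by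
    intro h; have := congrArg re h; simp at this; linarith
  unfold GG
  exact (h2.neg.sub_const 1).div (by fun_prop) (mul_ne_zero hs0 hs1)

lemma GG_bound (hRH : RiemannHypothesis) : ∃ C : ℝ, 0 < C ∧ ∀ s : ℂ, 0.55 ≤ s.re → s.re ≤ 2 →
    ‖GG s‖ ≤ C * (1 + |s.im|) ^ (-(39/20) : ℝ) ∧ ‖GG s‖ * ‖s+1‖^(0.9:ℝ) ≤ C * (1 + |s.im|) ^ (-(1.05) : ℝ) := by
  obtain ⟨C, hC, h⟩ := logderiv_bound' hRH
  have key : ∀ s : ℂ, 0.55 ≤ s.re → s.re ≤ 2 →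
    ‖GG s‖ ≤ (10 * (C+1)) * (1 + |s.im|) ^ (-(39/20) : ℝ) := by
    intro s h1 h2
    have hL := h s h1 h2
    set T := 1 + |s.im| with hT
    have hT1 : 1 ≤ T := by have := abs_nonneg s.im; linarith
    have a1 : 0.35 * T ≤ ‖s‖ := by
      have := abs_re_le_norm s
      have := abs_im_le_norm s
      have := le_abs_self s.re
      linarith
    have a2 : 0.5 * T ≤ ‖s+1‖ := by
      have := abs_re_le_norm (s+1)
      have := abs_im_le_norm (s+1)
      have := le_abs_self (s+1).re
      simp at *
      linarith
    have hn : ‖-LL s - 1‖ ≤ (C+1) * T ^ (1/20:ℝ) := by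
      have h3 : ‖-LL s - 1‖ ≤ ‖LL s‖ + 1 := by
        have := norm_sub_le (-LL s) 1
        rwa [norm_neg, norm_one] at this
      have h4 : 1 ≤ T ^ (1/20:ℝ) := Real.one_le_rpow hT1 (by norm_num)
      have h5 : ‖LL s‖ ≤ C * T ^ (1/20:ℝ) := hL
      linarith
    unfold GG
    rw [norm_div, norm_mul, div_le_iff₀ (by apply mul_pos <;> linarith)]
    have e : T ^ (-(39/20):ℝ) * (T * T) = T ^ (1/20:ℝ) := by
      rw [← sq, ← Real.rpow_natCast, ← Real.rpow_add (by linarith)]; norm_num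
    have : 0.35 * T * (0.5 * T) ≤ ‖s‖ * ‖s+1‖ := mul_le_mul a1 a2 (by linarith) (norm_nonneg _)
    have hp : 0 ≤ T ^ (-(39/20):ℝ) := by positivity
    calc _ ≤ (C+1) * T ^ (1/20:ℝ) := hn
      _ = (C+1) * T ^ (-(39/20):ℝ) * (T*T) := by rw [mul_assoc, e]
      _ ≤ (C+1) * T ^ (-(39/20):ℝ) * (10 * (‖s‖ * ‖s+1‖)) :=
          mul_le_mul_of_nonneg_left (by nlinarith) (by positivity)
      _ = _ := by ring
  refine ⟨4 * (10 * (C+1)), by positivity, fun s h1 h2 => ⟨(key s h1 h2).trans ?_, ?_⟩⟩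
  · have : 0 ≤ (10 * (C+1)) * (1 + |s.im|) ^ (-(39/20) : ℝ) := by positivity
    linarith
  · set T := 1 + |s.im| with hT
    have hT1 : 1 ≤ T := by have := abs_nonneg s.im; linarith
    have b : ‖s+1‖ ≤ 4 * T := by
      have := norm_le_abs_re_add_abs_im (s+1)
      simp at this
      rw [abs_of_nonneg (by linarith)] at this
      linarith
    have b2 : ‖s+1‖^(0.9:ℝ) ≤ 4 * T^(0.9:ℝ) := by
      calc _ ≤ (4*T)^(0.9:ℝ) := by gcongr
        _ = 4^(0.9:ℝ) * T^(0.9:ℝ) := by rw [Real.mul_rpow (by norm_num) (by linarith)]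
        _ ≤ 4 * T^(0.9:ℝ) := by
          gcongr
          calc (4:ℝ)^(0.9:ℝ) ≤ 4^(1:ℝ) := Real.rpow_le_rpow_of_exponent_le (by norm_num) (by norm_num)
            _ = 4 := by simp
    calc _ ≤ (10 * (C+1)) * T ^ (-(39/20) : ℝ) * (4 * T^(0.9:ℝ)) := by
            gcongr; exact key s h1 h2
      _ = 4 * (10 * (C+1)) * (T ^ (-(39/20) : ℝ) * T^(0.9:ℝ)) := by ring
      _ = _ := by rw [← Real.rpow_add (by linarith)]; norm_num

lemma line_int {b a : ℝ} (ha : 1 < a) {F : ℂ → ℂ} {C : ℝ} (hF : Continuous fun t : ℝ => F (b + t * I))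
    (hb : ∀ t : ℝ, ‖F (b + t * I)‖ ≤ C * (1 + |t|)^(-a)) : Integrable fun t : ℝ => F (b + t * I) := by
  have := (integrable_one_add_norm (E := ℝ) (μ := volume) (r := a) (by simpa using ha)).const_mul C
  exact this.mono' hF.aestronglyMeasurable (ae_of_all _ hb)

lemma mellin_D1C {s : ℂ} (hs : 1 < s.re) : mellin D1C (-(s+1)) = GG s ∧ MellinConvergent D1C (-(s+1)) := by
  have key : (fun t : ℝ => (t:ℂ)^(-(s+1)-1) • D1C t) = (Ioi (1:ℝ)).indicator (fun u => (D1 u : ℂ) * (u:ℂ)^(-(s+1+1))) := by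
    ext t
    unfold D1C
    by_cases h : 1 < t
    · rw [if_pos h, indicator_of_mem (by exact h), smul_eq_mul, mul_comm]; congr 2; ring
    · rw [if_neg h, indicator_of_notMem (by exact h)]; simp
  have hss : Ioi (1:ℝ) ⊆ Ioi 0 := Ioi_subset_Ioi zero_le_one
  constructor
  · unfold mellin
    rw [key, setIntegral_indicator measurableSet_Ioi, inter_eq_right.mpr hss, mell1 hs, GG]
  · unfold MellinConvergent
    rw [key]
    have h2 : IntegrableOn (fun u : ℝ => (D1 u : ℂ) * (u:ℂ)^(-(s+1+1))) (Ioi 1) := by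
      have h := (cpow_int (s := s - 1) (by simpa using hs)).norm.const_mul 7
      refine Integrable.mono' h ?_ ?_
      · refine AEStronglyMeasurable.mul (Complex.continuous_ofReal.comp D1C_cont).aestronglyMeasurable ?_
        apply Measurable.aestronglyMeasurable
        fun_prop
      · filter_upwards [ae_restrict_mem measurableSet_Ioi] with v hv
        have hv1 : (1:ℝ) < v := hv
        have hv0 : (0:ℝ) < v := lt_trans one_pos hv
        rw [norm_mul, Complex.norm_real, cpow_re_norm hv0, cpow_re_norm hv0]
        have e : (-(s - 1 + 1)).re = (-(s+1+1)).re + 1 + 1 := by simp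
        rw [e, Real.rpow_add_one hv0.ne', Real.rpow_add_one hv0.ne']
        have hD : ‖D1 v‖ ≤ 7 * v * v := by
          have := intervalIntegral.norm_integral_le_of_norm_le_const (a := 1) (b := v) (f := dr) (C := 7 * v) (by
            intro x hx
            rw [uIoc_of_le hv1.le] at hx
            refine (dr_bound (by linarith [hx.1])).trans ?_
            linarith [hx.2])
          rw [abs_of_pos (by linarith)] at this
          refine this.trans ?_
          gcongr; linarith
        have h2 : (0:ℝ) ≤ v ^ (-(s+1+1)).re := by positivity
        nlinarith
    exact ((integrable_indicator_iff measurableSet_Ioi).mpr h2).integrableOn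

lemma GG_line (hRH : RiemannHypothesis) {b : ℝ} (h1 : 0.55 ≤ b) (h2 : b ≤ 2) :
    Integrable fun t : ℝ => GG (b + t * I) := by
  obtain ⟨C, hC, h⟩ := GG_bound hRH
  refine line_int (a := 39/20) (C := C) (by norm_num) ?_ ?_
  · refine continuous_iff_continuousAt.mpr fun t => ?_
    have := (GG_diff hRH (s := b + t * I) (by simp; linarith)).continuousAt
    exact ContinuousAt.comp (f := fun t : ℝ => (b:ℂ) + t * I) this (by fun_prop)
  · intro t
    have := (h (b + t * I) (by simpa using h1) (by simpa using h2)).1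
    simpa using this

lemma D1_formula (hRH : RiemannHypothesis) {x : ℝ} (hx : 1 < x) :
    (D1 x : ℂ) = (1 / (2 * Real.pi) : ℂ) * ∫ t : ℝ, GG (2 + t * I) * (x:ℂ)^((2 + t * I) + 1) := by
  have hconv : MellinConvergent D1C ((-3 : ℝ) : ℂ) := by
    have := (mellin_D1C (s := 2) (by norm_num)).2
    convert this using 1
    push_cast; ring
  have hm : ∀ t : ℝ, mellin D1C (((-3:ℝ):ℂ) + t * I) = GG (((2:ℝ):ℂ) + (-t : ℝ) * I) := by
    intro t
    have := (mellin_D1C (s := 2 + (-t:ℝ) * I) (by simp)).1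
    rw [ofReal_ofNat, ← this]; congr 1; push_cast; ring
  have hvert : VerticalIntegrable (mellin D1C) (-3) := by
    unfold VerticalIntegrable
    have := (GG_line hRH (b := 2) (by norm_num) le_rfl).comp_neg
    refine this.congr (ae_of_all _ fun t => ?_)
    simp only [hm]
  have hcont : ContinuousAt D1C x := by
    have : (fun y => (D1 y : ℂ)) =ᶠ[𝓝 x] D1C := by
      filter_upwards [lt_mem_nhds hx] with y hy
      simp [D1C, hy]
    exact ContinuousAt.congr (Complex.continuous_ofReal.comp D1C_cont).continuousAt this
  have := mellinInv_mellin_eq (-3) D1C (by linarith) hconv hvert hcont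
  have e : D1C x = D1 x := by simp [D1C, hx]
  rw [← e, ← this, mellinInv]
  rw [← integral_neg_eq_self]
  simp only [hm, smul_eq_mul, neg_neg]
  rw [Complex.real_smul]
  congr 1
  · push_cast; rfl
  · congr 1; ext t
    rw [mul_comm]
    congr 2
    push_cast; ring

end

section

open Complex Set MeasureTheory Filter Topology Asymptotics

lemma contour {F : ℂ → ℂ} {b c a C : ℝ} (hbc : b ≤ c) (ha : 1 < a)
    (hF : ∀ s : ℂ, b ≤ s.re → s.re ≤ c → DifferentiableAt ℂ F s)
    (hB : ∀ s : ℂ, b ≤ s.re → s.re ≤ c → ‖F s‖ ≤ C * (1 + |s.im|)^(-a)) :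
    ∫ t : ℝ, F (b + t * I) = ∫ t : ℝ, F (c + t * I) := by
  have hint : ∀ d : ℝ, b ≤ d → d ≤ c → Integrable fun t : ℝ => F (d + t * I) := by
    intro d h1 h2
    refine line_int (a := a) (C := C) ha ?_ ?_
    · refine continuous_iff_continuousAt.mpr fun t => ?_
      have := (hF (d + t * I) (by simpa using h1) (by simpa using h2)).continuousAt
      exact ContinuousAt.comp (f := fun t : ℝ => (d:ℂ) + t * I) this (by fun_prop)
    · intro t
      simpa using hB (d + t * I) (by simpa using h1) (by simpa using h2)
  have hlim : ∀ d : ℝ, b ≤ d → d ≤ c →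
      Tendsto (fun T : ℝ => ∫ t in (-T)..T, F (d + t * I)) atTop (𝓝 (∫ t : ℝ, F (d + t * I))) := by
    intro d h1 h2
    exact intervalIntegral_tendsto_integral (hint d h1 h2) tendsto_neg_atTop_atBot tendsto_id
  have hpow : Tendsto (fun T : ℝ => C * (1 + |T|)^(-a) * |c - b|) atTop (𝓝 0) := by
    have h1 : Tendsto (fun T : ℝ => 1 + |T|) atTop atTop :=
      tendsto_atTop_add_const_left _ _ tendsto_abs_atTop_atTop
    have h2 := (tendsto_rpow_neg_atTop (y := a) (by linarith)).comp h1
    simpa using (h2.const_mul C).mul_const |c - b|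
  have hhor : ∀ e : ℝ, |e| = 1 → Tendsto (fun T : ℝ => ∫ x in b..c, F (x + (e * T : ℝ) * I)) atTop (𝓝 0) := by
    intro e he
    refine squeeze_zero_norm (fun T => ?_) hpow
    apply intervalIntegral.norm_integral_le_of_norm_le_const
    intro x hx
    rw [uIoc_of_le hbc] at hx
    have := hB (x + (e * T : ℝ) * I) (by simpa using hx.1.le) (by simpa using hx.2)
    have e2 : ((x:ℂ) + (e * T : ℝ) * I).im = e * T := by simp
    rw [e2, abs_mul, he, one_mul] at this
    exact this
  have hrect : ∀ T : ℝ, (∫ x in b..c, F (x + ((-1) * T : ℝ) * I)) - (∫ x in b..c, F (x + (1 * T : ℝ) * I))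
      + I * (∫ t in (-T)..T, F (c + t * I)) - I * (∫ t in (-T)..T, F (b + t * I)) = 0 := by
    intro T
    have := integral_boundary_rect_eq_zero_of_differentiableOn F ⟨b, -T⟩ ⟨c, T⟩ (by
      intro s hs
      rw [mem_reProdIm] at hs
      simp only [uIcc_of_le hbc] at hs
      exact (hF s hs.1.1 hs.1.2).differentiableWithinAt)
    simpa using this
  have hfin := (((hhor (-1) (by simp)).sub (hhor 1 (by simp))).add ((hlim c hbc le_rfl).const_mul I)).sub
    ((hlim b le_rfl hbc).const_mul I)
  simp only [hrect] at hfin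
  have h0 := tendsto_nhds_unique hfin tendsto_const_nhds
  have h1 : I * ((∫ t : ℝ, F (c + t * I)) - ∫ t : ℝ, F (b + t * I)) = 0 := by
    rw [← h0]; ring
  have := (mul_eq_zero.mp h1).resolve_left I_ne_zero
  exact (sub_eq_zero.mp this).symm

lemma D1_shift (hRH : RiemannHypothesis) {x : ℝ} (hx : 1 < x) :
    (D1 x : ℂ) = (1 / (2 * Real.pi) : ℂ) * ∫ t : ℝ, GG ((0.55:ℝ) + t * I) * (x:ℂ)^(((0.55:ℝ) + t * I) + 1) := by
  rw [D1_formula hRH hx]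
  congr 1
  obtain ⟨C, hC, h⟩ := GG_bound hRH
  have := contour (F := fun s => GG s * (x:ℂ)^(s+1)) (b := 0.55) (c := 2) (a := 39/20) (C := C * x^(3:ℝ))
    (by norm_num) (by norm_num) (fun s h1 h2 => by
      refine (GG_diff hRH (by linarith)).mul ?_
      have : (x:ℂ) ≠ 0 := by
        have : (0:ℝ) < x := by linarith
        exact_mod_cast this.ne'
      exact DifferentiableAt.const_cpow (by fun_prop) (Or.inl this)) (fun s h1 h2 => by
      rw [norm_mul, cpow_re_norm (by linarith)]
      have h3 := (h s h1 h2).1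
      have h4 : x ^ (s+1).re ≤ x^(3:ℝ) := Real.rpow_le_rpow_of_exponent_le hx.le (by simp; linarith)
      calc _ ≤ (C * (1 + |s.im|) ^ (-(39/20) : ℝ)) * x^(3:ℝ) := by gcongr
        _ = _ := by ring)
  simp only [ofReal_ofNat] at this
  exact this.symm

lemma cpow_diff {y h : ℝ} (hy : 0 < y) (hh : 0 < h) {s : ℂ} (hs : 0 ≤ s.re) :
    ‖((y + h : ℝ):ℂ)^(s+1) - (y:ℂ)^(s+1)‖ ≤ 2 * ‖s+1‖^(0.9:ℝ) * (h^(0.9:ℝ) * (y+h)^(s.re + 0.1)) := by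
  have hs1 : s + 1 ≠ 0 := by
    intro h; have := congrArg re h; simp at this; linarith
  set N := ‖((y + h : ℝ):ℂ)^(s+1) - (y:ℂ)^(s+1)‖ with hN
  have hyh : 0 < y + h := by linarith
  have b1 : N ≤ ‖s+1‖ * h * (y+h)^s.re := by
    have := (convex_Icc y (y+h)).norm_image_sub_le_of_norm_hasDerivWithin_le
      (f := fun u : ℝ => (u:ℂ)^(s+1)) (f' := fun u : ℝ => (s+1) * (u:ℂ)^(s+1-1)) (C := ‖s+1‖ * (y+h)^s.re)
      (x := y) (y := y+h) (fun u hu => (hasDerivAt_ofReal_cpow_const (x := u) (r := s+1)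
        (by have := hu.1; intro h0; linarith) hs1).hasDerivWithinAt) (fun u hu => by
        rw [norm_mul, cpow_re_norm (by linarith [hu.1]), add_sub_cancel_right]
        gcongr
        exacts [by linarith [hu.1], hu.2]) ⟨le_rfl, by linarith⟩ ⟨by linarith, le_rfl⟩
    have e : ‖y + h - y‖ = h := by simp [abs_of_pos hh]
    rw [e] at this
    refine this.trans (le_of_eq (by ring))
  have b2 : N ≤ 2 * (y+h)^(s.re+1) := by
    have h1 := norm_sub_le (((y + h : ℝ):ℂ)^(s+1)) ((y:ℂ)^(s+1))
    rw [cpow_re_norm hyh, cpow_re_norm hy] at h1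
    have e : (s+1).re = s.re + 1 := by simp
    rw [e] at h1
    have : y^(s.re+1) ≤ (y+h)^(s.re+1) := Real.rpow_le_rpow hy.le (by linarith) (by linarith)
    linarith
  have hN0 : 0 ≤ N := norm_nonneg _
  calc N = N^(0.9:ℝ) * N^(0.1:ℝ) := by
        rw [← Real.rpow_add_of_nonneg hN0 (by norm_num) (by norm_num)]; norm_num
    _ ≤ (‖s+1‖ * h * (y+h)^s.re)^(0.9:ℝ) * (2 * (y+h)^(s.re+1))^(0.1:ℝ) := by gcongr
    _ = 2^(0.1:ℝ) * ‖s+1‖^(0.9:ℝ) * (h^(0.9:ℝ) * (((y+h)^s.re)^(0.9:ℝ) * ((y+h)^(s.re+1))^(0.1:ℝ))) := by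
        rw [Real.mul_rpow (by positivity) (by positivity), Real.mul_rpow (by positivity) (by positivity),
          Real.mul_rpow (by positivity) (by positivity)]
        ring
    _ = 2^(0.1:ℝ) * ‖s+1‖^(0.9:ℝ) * (h^(0.9:ℝ) * (y+h)^(s.re + 0.1)) := by
        rw [← Real.rpow_mul hyh.le, ← Real.rpow_mul hyh.le, ← Real.rpow_add hyh]
        congr 3; ring
    _ ≤ _ := by
        gcongr
        calc (2:ℝ)^(0.1:ℝ) ≤ 2^(1:ℝ) := Real.rpow_le_rpow_of_exponent_le (by norm_num) (by norm_num)
            _ = 2 := by simp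

lemma D1_diff (hRH : RiemannHypothesis) : ∃ C : ℝ, 0 < C ∧ ∀ y h : ℝ, 1 < y → 0 < h →
    |D1 (y+h) - D1 y| ≤ C * (h^(0.9:ℝ) * (y+h)^(0.65:ℝ)) := by
  obtain ⟨C, hC, hG⟩ := GG_bound hRH
  have hJ := (integrable_one_add_norm (E := ℝ) (μ := volume) (r := 1.05) (by norm_num))
  set J := ∫ t : ℝ, (1 + ‖t‖)^(-(1.05:ℝ)) with hJd
  have hJ0 : 0 ≤ J := integral_nonneg fun t => by positivity
  refine ⟨2 * C * J + 1, by positivity, fun y h hy hh => ?_⟩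
  have hI : ∀ x : ℝ, 1 < x → Integrable fun t : ℝ => GG ((0.55:ℝ) + t * I) * (x:ℂ)^(((0.55:ℝ) + t * I) + 1) := by
    intro x hx
    have hx0 : (x:ℂ) ≠ 0 := by
        have : (0:ℝ) < x := by linarith
        exact_mod_cast this.ne'
    refine line_int (F := fun s => GG s * (x:ℂ)^(s+1)) (a := 39/20) (C := C * x^(1.55:ℝ)) (by norm_num) ?_ ?_
    · refine continuous_iff_continuousAt.mpr fun t => ?_
      have h1 := (GG_diff hRH (s := (0.55:ℝ) + t * I) (by simp; norm_num)).continuousAt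
      have h2 : ContinuousAt (fun s : ℂ => GG s * (x:ℂ)^(s+1)) ((0.55:ℝ) + t * I) := by
        refine h1.mul ?_
        exact (DifferentiableAt.const_cpow (by fun_prop) (Or.inl hx0)).continuousAt
      exact ContinuousAt.comp (f := fun t : ℝ => ((0.55:ℝ):ℂ) + t * I) h2 (by fun_prop)
    · intro t
      have h1 := (hG ((0.55:ℝ) + t * I) (by simp) (by simp; norm_num)).1
      rw [norm_mul, cpow_re_norm (by linarith)]
      have e1 : (((0.55:ℝ):ℂ) + t * I).im = t := by simp
      have e2 : (((0.55:ℝ):ℂ) + t * I + 1).re = 1.55 := by simp; norm_num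
      rw [e1] at h1
      rw [e2]
      calc _ ≤ (C * (1 + |t|) ^ (-(39/20) : ℝ)) * x^(1.55:ℝ) := by gcongr
        _ = _ := by ring
  have e : (((D1 (y+h) - D1 y : ℝ)):ℂ) = (1 / (2 * Real.pi) : ℂ) * ∫ t : ℝ, GG ((0.55:ℝ) + t * I) *
      (((y+h:ℝ):ℂ)^(((0.55:ℝ) + t * I) + 1) - (y:ℂ)^(((0.55:ℝ) + t * I) + 1)) := by
    rw [ofReal_sub, D1_shift hRH (by linarith : 1 < y + h), D1_shift hRH hy, ← mul_sub,
      ← integral_sub (hI _ (by linarith)) (hI _ hy)]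
    simp only [mul_sub]
  rw [← Real.norm_eq_abs, ← Complex.norm_real, e, norm_mul]
  have hpi : ‖(1 / (2 * Real.pi) : ℂ)‖ ≤ 1 := by
    rw [norm_div, norm_mul, norm_one, Complex.norm_real, Real.norm_of_nonneg Real.pi_pos.le]
    rw [div_le_one (by have := Real.pi_pos; simp [this])]
    have := Real.pi_gt_three
    simp; linarith
  have hb : ‖∫ t : ℝ, GG ((0.55:ℝ) + t * I) *
      (((y+h:ℝ):ℂ)^(((0.55:ℝ) + t * I) + 1) - (y:ℂ)^(((0.55:ℝ) + t * I) + 1))‖ ≤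
      ∫ t : ℝ, 2 * C * (h^(0.9:ℝ) * (y+h)^(0.65:ℝ)) * (1 + ‖t‖)^(-(1.05:ℝ)) := by
    refine norm_integral_le_of_norm_le (hJ.const_mul _) (ae_of_all _ fun t => ?_)
    rw [norm_mul]
    have h1 := (hG ((0.55:ℝ) + t * I) (by simp) (by simp; norm_num)).2
    have h2 := cpow_diff (y := y) (h := h) (by linarith) hh (s := (0.55:ℝ) + t * I) (by simp; norm_num)
    have e1 : (((0.55:ℝ):ℂ) + t * I).im = t := by simp
    have e2 : (((0.55:ℝ):ℂ) + t * I).re + 0.1 = 0.65 := by simp; norm_num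
    rw [e1] at h1
    rw [e2] at h2
    have hP : 0 ≤ h^(0.9:ℝ) * (y+h)^(0.65:ℝ) := by
      have : 0 ≤ y + h := by linarith
      positivity
    calc _ ≤ ‖GG ((0.55:ℝ) + t * I)‖ * (2 * ‖((0.55:ℝ):ℂ) + t * I+1‖^(0.9:ℝ) * (h^(0.9:ℝ) * (y+h)^(0.65:ℝ))) := by gcongr
      _ = 2 * (h^(0.9:ℝ) * (y+h)^(0.65:ℝ)) * (‖GG ((0.55:ℝ) + t * I)‖ * ‖((0.55:ℝ):ℂ) + t * I+1‖^(0.9:ℝ)) := by ring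
      _ ≤ 2 * (h^(0.9:ℝ) * (y+h)^(0.65:ℝ)) * (C * (1 + |t|) ^ (-(1.05) : ℝ)) := by gcongr
      _ = _ := by rw [Real.norm_eq_abs]; ring
  rw [integral_const_mul, ← hJd] at hb
  have hP : 0 ≤ h^(0.9:ℝ) * (y+h)^(0.65:ℝ) := by
      have : 0 ≤ y + h := by linarith
      positivity
  calc _ ≤ 1 * (2 * C * (h^(0.9:ℝ) * (y+h)^(0.65:ℝ)) * J) := by gcongr
    _ ≤ _ := by nlinarith

end

section

open Complex Set MeasureTheory Filter Topology Asymptotics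

lemma D1_sub (a b : ℝ) : D1 b - D1 a = ∫ v in a..b, dr v := by
  unfold D1
  rw [intervalIntegral.integral_interval_sub_left (dr_ii _ _) (dr_ii _ _)]

lemma psi_bound (hRH : RiemannHypothesis) : ∃ K : ℝ, 0 < K ∧ ∀ x : ℝ, 1 ≤ x →
    |Chebyshev.psi x - x| ≤ K * x^(0.6:ℝ) := by
  obtain ⟨C, hC, hD⟩ := D1_diff hRH
  refine ⟨2 * C + 1 + 28, by positivity, fun x hx => ?_⟩
  have hx0 : 0 < x := by linarith
  have hX1 : 1 ≤ x^(0.6:ℝ) := Real.one_le_rpow hx (by norm_num)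
  rcases le_total x 4 with h4 | h4
  · have := dr_bound (v := x) (by linarith)
    unfold dr at this
    nlinarith
  set h := x^(0.5:ℝ) with hh
  have hsq : h * h = x := by rw [hh, ← Real.rpow_add hx0]; norm_num
  have hpos : 0 < h := by positivity
  have h2 : 2 ≤ h := by nlinarith
  have hle : 2 * h ≤ x := by nlinarith
  have hX5 : h ≤ x^(0.6:ℝ) := Real.rpow_le_rpow_of_exponent_le hx (by norm_num)
  -- main error term
  have herr : ∀ y : ℝ, 0 ≤ y → y ≤ 2 * x → C * (h^(0.9:ℝ) * y^(0.65:ℝ)) ≤ h * (2 * C * x^(0.6:ℝ)) := by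
    intro y hy0 hy
    have e1 : y^(0.65:ℝ) ≤ 2 * x^(0.65:ℝ) := by
      calc y^(0.65:ℝ) ≤ (2*x)^(0.65:ℝ) := by gcongr
        _ = 2^(0.65:ℝ) * x^(0.65:ℝ) := Real.mul_rpow (by norm_num) hx0.le
        _ ≤ 2^(1:ℝ) * x^(0.65:ℝ) := by
          gcongr
          · norm_num
          · norm_num
        _ = _ := by simp
    have e2 : h^(0.9:ℝ) * x^(0.65:ℝ) = h * x^(0.6:ℝ) := by
      rw [hh, ← Real.rpow_mul hx0.le, ← Real.rpow_add hx0, ← Real.rpow_add hx0]; norm_num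
    have e3 : h^(0.9:ℝ) * y^(0.65:ℝ) ≤ 2 * (h * x^(0.6:ℝ)) := by
      rw [← e2]
      have : 0 ≤ h^(0.9:ℝ) := by positivity
      nlinarith
    nlinarith
  have up := hD x h (by linarith) hpos
  have lo := hD (x - h) h (by linarith) hpos
  rw [sub_add_cancel] at lo
  rw [D1_sub] at up lo
  replace up := up.trans (herr (x+h) (by linarith) (by linarith))
  replace lo := lo.trans (herr x (by linarith) (by linarith))
  have i1 : h * (Chebyshev.psi x - (x + h)) ≤ ∫ v in x..(x+h), dr v := by
    have := intervalIntegral.integral_mono_on (a := x) (b := x + h) (μ := volume)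
      (f := fun _ => Chebyshev.psi x - (x+h)) (g := dr) (by linarith) (by simp) (dr_ii _ _) (fun v hv => by
        unfold dr
        have := Chebyshev.psi_mono hv.1
        linarith [hv.2])
    simp at this
    nlinarith
  have i2 : ∫ v in (x-h)..x, dr v ≤ h * (Chebyshev.psi x - (x - h)) := by
    have := intervalIntegral.integral_mono_on (a := x - h) (b := x) (μ := volume)
      (g := fun _ => Chebyshev.psi x - (x-h)) (f := dr) (by linarith) (dr_ii _ _) (by simp) (fun v hv => by
        unfold dr
        have := Chebyshev.psi_mono hv.2
        linarith [hv.1])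
    simp at this
    nlinarith
  have j1 : h * (Chebyshev.psi x - (x + h)) ≤ h * (2 * C * x^(0.6:ℝ)) := i1.trans ((le_abs_self _).trans up)
  have j2 : h * (-(2 * C * x^(0.6:ℝ))) ≤ h * (Chebyshev.psi x - (x - h)) := by
    have := (neg_abs_le (∫ v in (x-h)..x, dr v))
    linarith
  replace j1 := le_of_mul_le_mul_left j1 hpos
  replace j2 := le_of_mul_le_mul_left j2 hpos
  rw [abs_le]; constructor <;> linarith

lemma theta_bound (hRH : RiemannHypothesis) : ∃ K : ℝ, 1 ≤ K ∧ ∀ x : ℝ, 1 ≤ x →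
    |Chebyshev.theta x - x| ≤ K * x^(0.6:ℝ) := by
  obtain ⟨K, hK, h⟩ := psi_bound hRH
  refine ⟨K + 20, by linarith, fun x hx => ?_⟩
  have hx0 : 0 < x := by linarith
  have h1 := h x hx
  have h2 := Chebyshev.abs_psi_sub_theta_le_sqrt_mul_log hx
  have h3 := Real.log_le_rpow_div (x := x) (ε := 0.1) hx0.le (by norm_num)
  have h4 : 2 * √x * Real.log x ≤ 20 * x^(0.6:ℝ) := by
    have e : √x * x^(0.1:ℝ) = x^(0.6:ℝ) := by
      rw [Real.sqrt_eq_rpow, ← Real.rpow_add hx0]; norm_num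
    calc _ ≤ 2 * √x * (x^(0.1:ℝ)/0.1) := by gcongr
      _ = 20 * (√x * x^(0.1:ℝ)) := by ring
      _ = _ := by rw [e]
  rw [abs_le] at *
  constructor <;> linarith [h1.1, h1.2, h2.1, h2.2]

end

section

open Set MeasureTheory Filter Topology

noncomputable def PP (a b : ℝ) : Finset ℕ := (Finset.Ioc ⌊a⌋₊ ⌊b⌋₊).filter Nat.Prime

lemma mem_PP {a b : ℝ} (ha : 0 ≤ a) (hb : 0 ≤ b) {p : ℕ} :
    p ∈ PP a b ↔ p.Prime ∧ a < p ∧ (p:ℝ) ≤ b := by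
  unfold PP
  rw [Finset.mem_filter, Finset.mem_Ioc, Nat.floor_lt ha, Nat.le_floor_iff hb]
  tauto

lemma theta_sub {a b : ℝ} (hab : a ≤ b) :
    Chebyshev.theta b - Chebyshev.theta a = ∑ p ∈ PP a b, Real.log p := by
  have hf : ⌊a⌋₊ ≤ ⌊b⌋₊ := Nat.floor_mono hab
  unfold Chebyshev.theta PP
  rw [sub_eq_iff_eq_add, add_comm, ← Finset.sum_union]
  · rw [← Finset.filter_union, Finset.Ioc_union_Ioc_eq_Ioc (Nat.zero_le _) hf]
  · apply Finset.disjoint_filter_filter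
    rw [Finset.disjoint_left]
    intro n h1 h2
    rw [Finset.mem_Ioc] at h1 h2
    omega

lemma sum_prod_log {a b c d : ℝ} (hab : a ≤ b) (hcd : c ≤ d) :
    ∑ pq ∈ PP a b ×ˢ PP c d, Real.log pq.1 * Real.log pq.2 =
    (Chebyshev.theta b - Chebyshev.theta a) * (Chebyshev.theta d - Chebyshev.theta c) := by
  rw [theta_sub hab, theta_sub hcd, Finset.sum_mul_sum, Finset.sum_product]

noncomputable def QQ (A B x : ℝ) : Finset (ℕ × ℕ) :=
  (PP A B ×ˢ PP A B).filter (fun pq => (pq.1 : ℝ) * (pq.2 : ℝ) ≤ x)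

noncomputable def TT (A B x : ℝ) : ℝ := ∑ pq ∈ QQ A B x, Real.log pq.1 * Real.log pq.2

lemma mem_QQ {A B x : ℝ} (hA : 0 ≤ A) (hB : 0 ≤ B) {pq : ℕ × ℕ} : pq ∈ QQ A B x ↔
    (pq.1.Prime ∧ A < pq.1 ∧ (pq.1:ℝ) ≤ B) ∧ (pq.2.Prime ∧ A < pq.2 ∧ (pq.2:ℝ) ≤ B) ∧
      (pq.1 : ℝ) * (pq.2 : ℝ) ≤ x := by
  unfold QQ
  rw [Finset.mem_filter, Finset.mem_product, mem_PP hA hB, mem_PP hA hB]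
  tauto

lemma log_bds {A B : ℝ} (hA : 1 ≤ A) {p : ℕ} (h1 : A < p) (h2 : (p:ℝ) ≤ B) :
    Real.log A ≤ Real.log p ∧ Real.log p ≤ Real.log B ∧ 0 ≤ Real.log A :=
  ⟨Real.log_le_log (by linarith) h1.le, Real.log_le_log (by linarith) h2, Real.log_nonneg hA⟩

lemma TT_lower {A B x : ℝ} (hA : 1 ≤ A) (hB : 0 ≤ B) :
    (QQ A B x).card * Real.log A ^ 2 ≤ TT A B x := by
  unfold TT
  rw [← nsmul_eq_mul]
  refine Finset.card_nsmul_le_sum _ _ _ fun pq h => ?_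
  rw [mem_QQ (by linarith) hB] at h
  obtain ⟨a1, a2, a3⟩ := log_bds hA h.1.2.1 h.1.2.2
  obtain ⟨b1, b2, b3⟩ := log_bds hA h.2.1.2.1 h.2.1.2.2
  rw [sq]; gcongr

lemma TT_upper {A B x : ℝ} (hA : 1 ≤ A) (hB : 0 ≤ B) :
    TT A B x ≤ (QQ A B x).card * Real.log B ^ 2 := by
  unfold TT
  rw [← nsmul_eq_mul]
  refine Finset.sum_le_card_nsmul _ _ _ fun pq h => ?_
  rw [mem_QQ (by linarith) hB] at h
  obtain ⟨a1, a2, a3⟩ := log_bds hA h.1.2.1 h.1.2.2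
  obtain ⟨b1, b2, b3⟩ := log_bds hA h.2.1.2.1 h.2.1.2.2
  rw [sq]
  exact mul_le_mul a2 b2 (by linarith) (by linarith)

lemma rect_sub {A B x X a b c d : ℝ} (hA : 0 ≤ A) (hX : 0 ≤ X) (hx : X * X ≤ x) (hXB : X ≤ B)
    (ha : A ≤ a) (hb : b ≤ X) (hb0 : 0 ≤ b) (hc : A ≤ c) (hd : d ≤ X) (hd0 : 0 ≤ d) :
    PP a b ×ˢ PP c d ⊆ QQ A B x := by
  intro pq h
  rw [Finset.mem_product, mem_PP (by linarith) hb0, mem_PP (by linarith) hd0] at h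
  rw [mem_QQ hA (by linarith)]
  obtain ⟨⟨h1, h2, h3⟩, h4, h5, h6⟩ := h
  refine ⟨⟨h1, by linarith, by linarith⟩, ⟨h4, by linarith, by linarith⟩, ?_⟩
  calc (pq.1:ℝ) * pq.2 ≤ X * X := by gcongr <;> linarith
    _ ≤ x := hx

lemma exp_diff {u : ℝ} (h0 : 0 ≤ u) (h1 : u ≤ 1) : u / 2 ≤ 1 - Real.exp (-u) := by
  have h := Real.add_one_le_exp u
  have h2 : Real.exp (-u) * Real.exp u = 1 := by rw [← Real.exp_add]; simp
  have h3 := Real.exp_pos (-u)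
  nlinarith

/-- lower bound for the theta increments -/
lemma theta_incr {K X a b η : ℝ} (hK : 1 ≤ K)
    (hθ : ∀ t : ℝ, 1 ≤ t → |Chebyshev.theta t - t| ≤ K * t^(0.6:ℝ)) (hX : 0 < X)
    (ha1 : 1 ≤ a) (hab : a ≤ b) (hb : b ≤ X) (hcond : 64 * K ≤ η * X^(0.4:ℝ))
    (hgap : X * η / 16 ≤ b - a) : X * η / 32 ≤ Chebyshev.theta b - Chebyshev.theta a := by
  have h1 := hθ a ha1
  have h2 := hθ b (by linarith)
  have e1 : a^(0.6:ℝ) ≤ X^(0.6:ℝ) := Real.rpow_le_rpow (by linarith) (by linarith) (by norm_num)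
  have e2 : b^(0.6:ℝ) ≤ X^(0.6:ℝ) := Real.rpow_le_rpow (by linarith) (by linarith) (by norm_num)
  have e3 : X^(0.4:ℝ) * X^(0.6:ℝ) = X := by rw [← Real.rpow_add hX]; norm_num
  have e4 : 64 * K * X^(0.6:ℝ) ≤ η * X := by
    calc _ ≤ η * X^(0.4:ℝ) * X^(0.6:ℝ) := by gcongr
      _ = η * X := by rw [mul_assoc, e3]
  rw [abs_le] at h1 h2
  have e5 : K * a^(0.6:ℝ) ≤ K * X^(0.6:ℝ) := by gcongr
  have e6 : K * b^(0.6:ℝ) ≤ K * X^(0.6:ℝ) := by gcongr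
  linarith [h1.1, h1.2, h2.1, h2.2]

lemma gaps {X η : ℝ} (hX : 0 < X) (hη : 0 < η) (hη1 : η ≤ 1) :
    X * η / 16 ≤ X - X * Real.exp (-(η/4)) ∧
    X * η / 16 ≤ X * Real.exp (-(η/4)) - X * Real.exp (-(η/2)) ∧
    X * η / 16 ≤ X - X * Real.exp (-(η/2)) := by
  have h1 := exp_diff (u := η/4) (by linarith) (by linarith)
  have e : Real.exp (-(η/2)) = Real.exp (-(η/4)) * Real.exp (-(η/4)) := by
    rw [← Real.exp_add]; congr 1; ring
  have h2 : 1/2 ≤ Real.exp (-(η/4)) := by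
    have := Real.add_one_le_exp (-(η/4)); linarith
  rw [e]
  set w := Real.exp (-(η/4))
  have hw1 : w ≤ 1 := by linarith
  have k : η/16 ≤ w * (1 - w) := by nlinarith
  refine ⟨?_, ?_, ?_⟩ <;> nlinarith

lemma gain_up {K A B x X η : ℝ} (hK : 1 ≤ K)
    (hθ : ∀ t : ℝ, 1 ≤ t → |Chebyshev.theta t - t| ≤ K * t^(0.6:ℝ))
    (hA : 3 ≤ A) (hX : X * X = x) (hXB : X ≤ B) (hη : 0 < η) (hη1 : η ≤ 1)
    (hAX : A ≤ X * Real.exp (-(η/2))) (hcond : 64 * K ≤ η * X^(0.4:ℝ)) :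
    (QQ A B x).card * Real.log A ^ 2 + x * η^3 / (8192 * Real.log A) ≤ TT A B x := by
  have hX0 : 0 < X := by
    have := Real.exp_pos (-(η/2))
    by_contra h
    have : X * Real.exp (-(η/2)) ≤ 0 := by nlinarith
    linarith
  obtain ⟨g1, g2, g3⟩ := gaps hX0 hη hη1
  have hpos : 0 < X * η / 16 := by positivity
  set D := X * Real.exp (-(η/4)) with hD
  set A' := X * Real.exp (-(η/2)) with hA'
  have hlA : 1 ≤ Real.log A := by
    rw [Real.le_log_iff_exp_le (by linarith)]
    have := Real.exp_one_lt_d9; linarith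
  have hsub : PP D X ×ˢ PP A' X ⊆ QQ A B x :=
    rect_sub (by linarith) hX0.le hX.le hXB (by linarith) le_rfl hX0.le (by linarith) le_rfl hX0.le
  have t1 := theta_incr hK hθ hX0 (a := D) (b := X) (by linarith) (by linarith) le_rfl hcond (by linarith)
  have t2 := theta_incr hK hθ hX0 (a := A') (b := X) (by linarith) (by linarith) le_rfl hcond (by linarith)
  have hW : ∑ pq ∈ PP D X ×ˢ PP A' X, η / (8 * Real.log A) * (Real.log pq.1 * Real.log pq.2)
      ≤ ∑ pq ∈ QQ A B x, (Real.log pq.1 * Real.log pq.2 - Real.log A ^ 2) := by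
    calc _ ≤ ∑ pq ∈ PP D X ×ˢ PP A' X, (Real.log pq.1 * Real.log pq.2 - Real.log A ^ 2) := by
          refine Finset.sum_le_sum fun pq h => ?_
          rw [Finset.mem_product, mem_PP (by linarith) hX0.le, mem_PP (by linarith) hX0.le] at h
          obtain ⟨⟨h1, h2, h3⟩, h4, h5, h6⟩ := h
          have l1 : Real.log A + η/4 ≤ Real.log pq.1 := by
            have e : Real.log A ≤ Real.log A' := Real.log_le_log (by linarith) hAX
            have e2 : Real.log A' + η/4 = Real.log D := by
              rw [hA', hD, Real.log_mul hX0.ne' (Real.exp_pos _).ne', Real.log_mul hX0.ne' (Real.exp_pos _).ne',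
                Real.log_exp, Real.log_exp]; ring
            have e3 : Real.log D ≤ Real.log pq.1 := Real.log_le_log (by linarith) h2.le
            linarith
          have l2 : Real.log A ≤ Real.log pq.2 := Real.log_le_log (by linarith) (by linarith)
          set a := Real.log A
          set P := Real.log pq.1
          set Q := Real.log pq.2
          have hk : η / (8 * a) * P ≤ P - a := by
            rw [div_mul_eq_mul_div, div_le_iff₀ (by linarith)]
            nlinarith
          nlinarith
      _ ≤ _ := by
          refine Finset.sum_le_sum_of_subset_of_nonneg hsub fun pq h _ => ?_
          rw [mem_QQ (by linarith) (by linarith)] at h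
          obtain ⟨a1, a2, a3⟩ := log_bds (by linarith) h.1.2.1 h.1.2.2
          obtain ⟨b1, b2, b3⟩ := log_bds (by linarith) h.2.1.2.1 h.2.1.2.2
          nlinarith
  rw [Finset.sum_sub_distrib, Finset.sum_const, nsmul_eq_mul, ← Finset.mul_sum,
    sum_prod_log (by linarith) (by linarith)] at hW
  have hm : X * η / 32 * (X * η / 32) ≤ (Chebyshev.theta X - Chebyshev.theta D) * (Chebyshev.theta X - Chebyshev.theta A') :=
    mul_le_mul t1 t2 (by positivity) (by linarith)
  have h8 : η / (8 * Real.log A) * (X * η / 32 * (X * η / 32)) = x * η^3 / (8192 * Real.log A) := by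
    rw [← hX]; field_simp; norm_num
  have h9 := mul_le_mul_of_nonneg_left hm (show 0 ≤ η / (8 * Real.log A) by positivity)
  unfold TT
  linarith

lemma gain_lo {K A B x X η : ℝ} (hK : 1 ≤ K)
    (hθ : ∀ t : ℝ, 1 ≤ t → |Chebyshev.theta t - t| ≤ K * t^(0.6:ℝ))
    (hA : 3 ≤ A) (hX : X * X = x) (hXB : X ≤ B) (hη : 0 < η) (hη1 : η ≤ 1)
    (hAX : A ≤ X * Real.exp (-(η/2))) (hcond : 64 * K ≤ η * X^(0.4:ℝ)) :
    TT A B x + x * η^3 / (8192 * Real.log B) ≤ (QQ A B x).card * Real.log B ^ 2 := by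
  have hX0 : 0 < X := by
    have := Real.exp_pos (-(η/2))
    by_contra h
    have : X * Real.exp (-(η/2)) ≤ 0 := by nlinarith
    linarith
  obtain ⟨g1, g2, g3⟩ := gaps hX0 hη hη1
  have hpos : 0 < X * η / 16 := by positivity
  set D := X * Real.exp (-(η/4)) with hD
  set A' := X * Real.exp (-(η/2)) with hA'
  have hlB : 1 ≤ Real.log B := by
    rw [Real.le_log_iff_exp_le (by linarith)]
    have := Real.exp_one_lt_d9; linarith
  have hsub : PP A' D ×ˢ PP A' X ⊆ QQ A B x :=
    rect_sub (by linarith) hX0.le hX.le hXB (by linarith) (by linarith) (by linarith) (by linarith) le_rfl hX0.le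
  have t1 := theta_incr hK hθ hX0 (a := A') (b := D) (by linarith) (by linarith) (by linarith) hcond (by linarith)
  have t2 := theta_incr hK hθ hX0 (a := A') (b := X) (by linarith) (by linarith) le_rfl hcond (by linarith)
  have hW : ∑ pq ∈ PP A' D ×ˢ PP A' X, η / (8 * Real.log B) * (Real.log pq.1 * Real.log pq.2)
      ≤ ∑ pq ∈ QQ A B x, (Real.log B ^ 2 - Real.log pq.1 * Real.log pq.2) := by
    calc _ ≤ ∑ pq ∈ PP A' D ×ˢ PP A' X, (Real.log B ^ 2 - Real.log pq.1 * Real.log pq.2) := by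
          refine Finset.sum_le_sum fun pq h => ?_
          rw [Finset.mem_product, mem_PP (by linarith) (by linarith), mem_PP (by linarith) hX0.le] at h
          obtain ⟨⟨h1, h2, h3⟩, h4, h5, h6⟩ := h
          have l1 : Real.log pq.1 + η/4 ≤ Real.log B := by
            have e : Real.log X ≤ Real.log B := Real.log_le_log (by linarith) hXB
            have e2 : Real.log D + η/4 = Real.log X := by
              rw [hD, Real.log_mul hX0.ne' (Real.exp_pos _).ne', Real.log_exp]; ring
            have e3 : Real.log pq.1 ≤ Real.log D := Real.log_le_log (by linarith) h3
            linarith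
          have l2 : Real.log pq.2 ≤ Real.log B := Real.log_le_log (by linarith) (by linarith)
          have l3 : 0 ≤ Real.log pq.2 := Real.log_nonneg (by linarith)
          have l4 : 0 ≤ Real.log pq.1 := Real.log_nonneg (by linarith)
          set a := Real.log B
          set P := Real.log pq.1
          set Q := Real.log pq.2
          have hk : η / (8 * a) * P ≤ a - P := by
            rw [div_mul_eq_mul_div, div_le_iff₀ (by linarith)]
            nlinarith
          nlinarith
      _ ≤ _ := by
          refine Finset.sum_le_sum_of_subset_of_nonneg hsub fun pq h _ => ?_
          rw [mem_QQ (by linarith) (by linarith)] at h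
          obtain ⟨a1, a2, a3⟩ := log_bds (by linarith) h.1.2.1 h.1.2.2
          obtain ⟨b1, b2, b3⟩ := log_bds (by linarith) h.2.1.2.1 h.2.1.2.2
          nlinarith
  rw [Finset.sum_sub_distrib, Finset.sum_const, nsmul_eq_mul, ← Finset.mul_sum,
    sum_prod_log (by linarith) (by linarith)] at hW
  have hm : X * η / 32 * (X * η / 32) ≤ (Chebyshev.theta D - Chebyshev.theta A') * (Chebyshev.theta X - Chebyshev.theta A') :=
    mul_le_mul t1 t2 (by positivity) (by linarith)
  have h8 : η / (8 * Real.log B) * (X * η / 32 * (X * η / 32)) = x * η^3 / (8192 * Real.log B) := by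
    rw [← hX]; field_simp; norm_num
  have h9 := mul_le_mul_of_nonneg_left hm (show 0 ≤ η / (8 * Real.log B) by positivity)
  unfold TT
  linarith

end

section

open Set MeasureTheory Filter Topology

noncomputable def mm (B x v : ℝ) : ℝ := min B (x / v)

lemma mm_anti {B x : ℝ} (hx : 0 ≤ x) : AntitoneOn (mm B x) (Ioi 0) := by
  intro u hu v hv huv
  unfold mm
  have hu' : 0 < u := hu
  gcongr

lemma le_mm {A B x v : ℝ} (hA : 0 < A) (hAB : A ≤ B) (hABx : A * B ≤ x) (h1 : A ≤ v) (h2 : v ≤ B) :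
    A ≤ mm B x v := by
  unfold mm
  refine le_min hAB ?_
  rw [le_div_iff₀ (by linarith)]
  nlinarith

lemma le_mm_iff {B x u v : ℝ} (hv : 0 < v) (hu : u ≤ B) : u ≤ mm B x v ↔ u * v ≤ x := by
  unfold mm
  rw [le_min_iff, le_div_iff₀ hv]
  tauto

lemma theta_mm {A B x v : ℝ} (hA : 0 < A) (hAB : A ≤ B) (hABx : A * B ≤ x) (h1 : A ≤ v) (h2 : v ≤ B) :
    Chebyshev.theta (mm B x v) - Chebyshev.theta A =
      ∑ p ∈ PP A B, if (p:ℝ) * v ≤ x then Real.log p else 0 := by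
  have hm := le_mm hA hAB hABx h1 h2
  rw [theta_sub hm, ← Finset.sum_filter]
  apply Finset.sum_congr _ (fun _ _ => rfl)
  ext p
  rw [Finset.mem_filter, mem_PP hA.le (by linarith), mem_PP hA.le (by linarith)]
  constructor
  · rintro ⟨a, b, c⟩
    have hB : (p:ℝ) ≤ B := c.trans (min_le_left _ _)
    exact ⟨⟨a, b, hB⟩, (le_mm_iff (by linarith) hB).mp c⟩
  · rintro ⟨⟨a, b, c⟩, d⟩
    exact ⟨a, b, (le_mm_iff (by linarith) c).mpr d⟩

lemma TT_eq {A B x : ℝ} (hA : 0 < A) (hAB : A ≤ B) (hABx : A * B ≤ x) :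
    TT A B x = ∑ p ∈ PP A B, Real.log p * (Chebyshev.theta (mm B x p) - Chebyshev.theta A) := by
  unfold TT QQ
  rw [Finset.sum_filter, Finset.sum_product]
  refine Finset.sum_congr rfl fun p hp => ?_
  rw [mem_PP hA.le (by linarith)] at hp
  rw [theta_mm hA hAB hABx hp.2.1.le hp.2.2, Finset.mul_sum]
  refine Finset.sum_congr rfl fun q hq => ?_
  rw [mul_ite, mul_zero, mul_comm (q:ℝ)]

lemma swap {A B x : ℝ} (hA : 0 < A) (hAB : A ≤ B) (hABx : A * B ≤ x) {g : ℝ → ℝ}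
    (hg : IntegrableOn g (Ioc A B)) :
    ∑ p ∈ PP A B, Real.log p * (∫ v in A..(mm B x p), g v) =
      ∫ v in A..B, g v * (Chebyshev.theta (mm B x v) - Chebyshev.theta A) := by
  rw [intervalIntegral.integral_of_le hAB]
  have e : ∀ v ∈ Ioc A B, g v * (Chebyshev.theta (mm B x v) - Chebyshev.theta A) =
      ∑ p ∈ PP A B, Real.log p * (Iic (mm B x p)).indicator g v := by
    intro v hv
    rw [theta_mm hA hAB hABx hv.1.le hv.2, Finset.mul_sum]
    refine Finset.sum_congr rfl fun p hp => ?_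
    rw [mem_PP hA.le (by linarith)] at hp
    have : v ∈ Iic (mm B x p) ↔ (p:ℝ) * v ≤ x := by
      rw [mem_Iic, le_mm_iff (by linarith) hv.2, mul_comm]
    by_cases h : (p:ℝ) * v ≤ x
    · rw [if_pos h, indicator_of_mem (this.mpr h), mul_comm]
    · rw [if_neg h, indicator_of_notMem (fun h' => h (this.mp h'))]; simp
  rw [setIntegral_congr_fun measurableSet_Ioc e, integral_finsetSum]
  · refine Finset.sum_congr rfl fun p hp => ?_
    rw [mem_PP hA.le (by linarith)] at hp
    rw [integral_const_mul, setIntegral_indicator measurableSet_Iic,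
      intervalIntegral.integral_of_le (le_mm hA hAB hABx hp.2.1.le hp.2.2)]
    have hle : mm B x p ≤ B := min_le_left _ _
    have hs : Ioc A B ∩ Iic (mm B x p) = Ioc A (mm B x p) := by
      ext v; simp only [mem_Ioc, mem_inter_iff, mem_Iic]
      constructor
      · rintro ⟨⟨a, b⟩, c⟩; exact ⟨a, c⟩
      · rintro ⟨a, b⟩; exact ⟨⟨a, by linarith⟩, b⟩
    rw [hs]
  · intro p _
    exact (hg.indicator measurableSet_Iic).const_mul _

lemma mm_rpow_ii {A B x κ : ℝ} (hA : 0 < A) (hAB : A ≤ B) (hx : 0 < x) (hκ : 0 ≤ κ) :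
    IntervalIntegrable (fun v => mm B x v ^ κ) volume A B := by
  apply AntitoneOn.intervalIntegrable
  rw [uIcc_of_le hAB]
  intro u hu v hv huv
  have hv0 : 0 < v := by linarith [hv.1]
  have := mm_anti (B := B) hx.le (show u ∈ Ioi 0 from by have := hu.1; simp; linarith) (show v ∈ Ioi 0 from hv0) huv
  refine Real.rpow_le_rpow ?_ this hκ
  unfold mm
  exact le_min (by linarith) (by positivity)

lemma mm_ii {A B x : ℝ} (hA : 0 < A) (hAB : A ≤ B) (hx : 0 < x) :
    IntervalIntegrable (fun v => mm B x v) volume A B := by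
  simpa using mm_rpow_ii (κ := 1) hA hAB hx (by norm_num)

lemma theta_mm_ii {A B x : ℝ} (hA : 0 < A) (hAB : A ≤ B) (hx : 0 < x) :
    IntervalIntegrable (fun v => Chebyshev.theta (mm B x v)) volume A B := by
  apply AntitoneOn.intervalIntegrable
  rw [uIcc_of_le hAB]
  intro u hu v hv huv
  exact Chebyshev.theta_mono (mm_anti (B := B) hx.le (show u ∈ Ioi 0 from by have := hu.1; simp; linarith)
    (show v ∈ Ioi 0 from by have := hv.1; simp; linarith) huv)

lemma area_eq {A B x : ℝ} (hA : 0 < A) (hAB : A ≤ B) (hABx : A * B ≤ x) (hx : x ≤ B * B) :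
    ∫ v in A..B, (mm B x v - A) = x - 2 * (A * B) + A * A + x * Real.log (B * B / x) := by
  have hx0 : 0 < x := lt_of_lt_of_le (by nlinarith) hABx
  have hB : 0 < B := by linarith
  have h1 : A ≤ x / B := by rw [le_div_iff₀ hB]; exact hABx
  have h2 : x / B ≤ B := by rw [div_le_iff₀ hB]; exact hx
  have h3 : 0 < x / B := by positivity
  rw [intervalIntegral.integral_sub (mm_ii hA hAB hx0) (by simp)]
  rw [← intervalIntegral.integral_add_adjacent_intervals (b := x / B) (mm_ii (B := B) hA hAB hx0 |>.mono_set (by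
      rw [uIcc_of_le h1, uIcc_of_le hAB]; exact Icc_subset_Icc_right h2)) (mm_ii (B := B) hA hAB hx0 |>.mono_set (by
      rw [uIcc_of_le h2, uIcc_of_le hAB]; exact Icc_subset_Icc_left h1))]
  have e1 : ∫ v in A..(x/B), mm B x v = ∫ v in A..(x/B), B := by
    apply intervalIntegral.integral_congr
    intro v hv
    rw [uIcc_of_le h1] at hv
    have hv0 : 0 < v := by linarith [hv.1]
    refine min_eq_left ?_
    have := hv.2
    rw [le_div_iff₀ hB] at this
    rw [le_div_iff₀ hv0]; linarith
  have e2 : ∫ v in (x/B)..B, mm B x v = ∫ v in (x/B)..B, x * v⁻¹ := by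
    apply intervalIntegral.integral_congr
    intro v hv
    rw [uIcc_of_le h2] at hv
    have hv0 : 0 < v := by linarith [hv.1]
    show min B (x / v) = x * v⁻¹
    rw [← div_eq_mul_inv]
    refine min_eq_right ?_
    have := hv.1
    rw [div_le_iff₀ hB] at this
    rw [div_le_iff₀ hv0]; linarith
  rw [e1, e2, intervalIntegral.integral_const_mul, integral_inv_of_pos h3 hB]
  simp only [intervalIntegral.integral_const, smul_eq_mul]
  rw [show B / (x / B) = B * B / x by field_simp]
  field_simp
  ring

lemma TT_err {K A B x : ℝ} (hK : 1 ≤ K)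
    (hθ : ∀ t : ℝ, 1 ≤ t → |Chebyshev.theta t - t| ≤ K * t^(0.6:ℝ))
    (hA : 1 ≤ A) (hAB : A ≤ B) (hABx : A * B ≤ x) :
    |TT A B x - ∫ v in A..B, (mm B x v - A)| ≤
      2 * K * (∑ p ∈ PP A B, Real.log p * mm B x p ^ (0.6:ℝ)) + 2 * K * ∫ v in A..B, mm B x v ^ (0.6:ℝ) := by
  have hA0 : 0 < A := by linarith
  have hx0 : 0 < x := lt_of_lt_of_le (by nlinarith) hABx
  have pt : ∀ v, A ≤ v → v ≤ B → |(Chebyshev.theta (mm B x v) - Chebyshev.theta A) - (mm B x v - A)| ≤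
      2 * K * mm B x v ^ (0.6:ℝ) := by
    intro v h1 h2
    have hm := le_mm hA0 hAB hABx h1 h2
    have a1 := hθ _ hA
    have a2 := hθ (mm B x v) (by linarith)
    have a3 : K * A^(0.6:ℝ) ≤ K * mm B x v ^ (0.6:ℝ) := by gcongr
    rw [abs_le] at *
    constructor <;> linarith [a1.1, a1.2, a2.1, a2.2]
  have sw := swap hA0 hAB hABx (g := fun _ => 1) (by simp)
  simp only [intervalIntegral.integral_const, smul_eq_mul, mul_one, one_mul] at sw
  have s1 : |TT A B x - ∑ p ∈ PP A B, Real.log p * (mm B x p - A)| ≤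
      2 * K * (∑ p ∈ PP A B, Real.log p * mm B x p ^ (0.6:ℝ)) := by
    rw [TT_eq hA0 hAB hABx, ← Finset.sum_sub_distrib, Finset.mul_sum]
    refine (Finset.abs_sum_le_sum_abs _ _).trans (Finset.sum_le_sum fun p hp => ?_)
    rw [mem_PP hA0.le (by linarith)] at hp
    have := pt p hp.2.1.le hp.2.2
    have hl : 0 ≤ Real.log p := Real.log_nonneg (by linarith)
    rw [← mul_sub, abs_mul, abs_of_nonneg hl]
    nlinarith
  have s2 : |(∫ v in A..B, (Chebyshev.theta (mm B x v) - Chebyshev.theta A)) - ∫ v in A..B, (mm B x v - A)| ≤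
      2 * K * ∫ v in A..B, mm B x v ^ (0.6:ℝ) := by
    rw [← intervalIntegral.integral_sub ((theta_mm_ii hA0 hAB hx0).sub (by simp)) ((mm_ii hA0 hAB hx0).sub (by simp)),
      ← intervalIntegral.integral_const_mul, ← Real.norm_eq_abs]
    refine intervalIntegral.norm_integral_le_of_norm_le hAB (ae_of_all _ fun v hv => ?_)
      ((mm_rpow_ii hA0 hAB hx0 (by norm_num)).const_mul _)
    exact pt v hv.1.le hv.2
  rw [sw] at s1
  rw [abs_le] at *
  constructor <;> linarith [s1.1, s1.2, s2.1, s2.2]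

lemma theta_two {t : ℝ} (ht : 0 ≤ t) : Chebyshev.theta t ≤ 2 * t := by
  have h := Chebyshev.theta_le_log4_mul_x ht
  have h4 : Real.log 4 < 2 := by
    rw [show (4:ℝ) = 2^2 by norm_num, Real.log_pow]
    have := Real.log_two_lt_d9; push_cast; linarith
  nlinarith

lemma err_small {K A B x : ℝ} (hK : 1 ≤ K)
    (hθ : ∀ t : ℝ, 1 ≤ t → |Chebyshev.theta t - t| ≤ K * t^(0.6:ℝ))
    (hA : 1 ≤ A) (hAB : A ≤ B) (hABx : A * B ≤ x) :
    |TT A B x - ∫ v in A..B, (mm B x v - A)| ≤ 4 * K * B^(0.6:ℝ) * ((B - A) + K * B^(0.6:ℝ)) := by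
  have hA0 : 0 < A := by linarith
  have hx0 : 0 < x := lt_of_lt_of_le (by nlinarith) hABx
  refine (TT_err hK hθ hA hAB hABx).trans ?_
  have hmB : ∀ v, A ≤ v → v ≤ B → mm B x v ^ (0.6:ℝ) ≤ B ^ (0.6:ℝ) := by
    intro v h1 h2
    have := le_mm hA0 hAB hABx h1 h2
    exact Real.rpow_le_rpow (by linarith) (min_le_left _ _) (by norm_num)
  have a : ∑ p ∈ PP A B, Real.log p * mm B x p ^ (0.6:ℝ) ≤ (Chebyshev.theta B - Chebyshev.theta A) * B^(0.6:ℝ) := by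
    rw [theta_sub hAB, Finset.sum_mul]
    refine Finset.sum_le_sum fun p hp => ?_
    rw [mem_PP hA0.le (by linarith)] at hp
    have hl : 0 ≤ Real.log p := Real.log_nonneg (by linarith)
    exact mul_le_mul_of_nonneg_left (hmB p hp.2.1.le hp.2.2) hl
  have b : ∫ v in A..B, mm B x v ^ (0.6:ℝ) ≤ (B - A) * B^(0.6:ℝ) := by
    have := intervalIntegral.integral_mono_on (μ := volume) (g := fun _ => B^(0.6:ℝ)) hAB (mm_rpow_ii (B := B) hA0 hAB hx0 (by norm_num : (0:ℝ) ≤ 0.6))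
      (by simp) (fun v hv => hmB v hv.1 hv.2)
    simpa using this
  have h1 := hθ A hA
  have h2 := hθ B (by linarith)
  have h3 : K * A^(0.6:ℝ) ≤ K * B ^ (0.6:ℝ) := by gcongr
  have hd : Chebyshev.theta B - Chebyshev.theta A ≤ (B - A) + 2 * K * B^(0.6:ℝ) := by
    rw [abs_le] at h1 h2
    linarith [h1.1, h1.2, h2.1, h2.2]
  have hP : 0 ≤ B^(0.6:ℝ) := by have : 0 ≤ B := by linarith
                                positivity
  have a' := a.trans (mul_le_mul_of_nonneg_right hd hP)
  have := mul_le_mul_of_nonneg_left (add_le_add a' b) (show 0 ≤ 2 * K by linarith)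
  linarith

lemma err_large {K A B x : ℝ} (hK : 1 ≤ K)
    (hθ : ∀ t : ℝ, 1 ≤ t → |Chebyshev.theta t - t| ≤ K * t^(0.6:ℝ))
    (hA : 1 ≤ A) (hAB : A ≤ B) (hABx : A * B ≤ x) :
    |TT A B x - ∫ v in A..B, (mm B x v - A)| ≤ 15 * K * (x * A^(-0.4:ℝ)) := by
  have hA0 : 0 < A := by linarith
  have hB0 : 0 < B := by linarith
  have hx0 : 0 < x := lt_of_lt_of_le (by nlinarith) hABx
  refine (TT_err hK hθ hA hAB hABx).trans ?_
  have eA : A^(0.6:ℝ) = A^(-0.4:ℝ) * A := by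
    rw [← Real.rpow_add_one hA0.ne']; norm_num
  have hP : 0 < A^(-0.4:ℝ) := by positivity
  -- the sum
  have ig : IntegrableOn (fun v : ℝ => 0.6 * v^(-0.4:ℝ)) (Ioc A B) := by
    have : IntervalIntegrable (fun v : ℝ => 0.6 * v^(-0.4:ℝ)) volume A B :=
      (intervalIntegral.intervalIntegrable_rpow' (by norm_num)).const_mul _
    rwa [intervalIntegrable_iff_integrableOn_Ioc_of_le hAB] at this
  have sw := swap hA0 hAB hABx ig
  have ev : ∀ p ∈ PP A B, Real.log p * mm B x p ^ (0.6:ℝ) =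
      Real.log p * A^(0.6:ℝ) + Real.log p * (∫ v in A..(mm B x p), 0.6 * v^(-0.4:ℝ)) := by
    intro p hp
    rw [intervalIntegral.integral_const_mul, integral_rpow (Or.inl (by norm_num))]
    norm_num
    ring
  rw [Finset.sum_congr rfl ev, Finset.sum_add_distrib, sw, ← Finset.sum_mul, ← theta_sub hAB]
  have t1 : (Chebyshev.theta B - Chebyshev.theta A) * A^(0.6:ℝ) ≤ 2 * (x * A^(-0.4:ℝ)) := by
    have u1 := theta_two hB0.le
    have u2 := Chebyshev.theta_nonneg A
    rw [eA]
    calc _ ≤ (2 * B) * (A^(-0.4:ℝ) * A) := by gcongr; linarith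
      _ = 2 * ((A * B) * A^(-0.4:ℝ)) := by ring
      _ ≤ _ := by gcongr
  have hnot : (0:ℝ) ∉ uIcc A B := by
    rw [uIcc_of_le hAB]; intro h; linarith [h.1]
  have t2 : ∫ v in A..B, 0.6 * v^(-0.4:ℝ) * (Chebyshev.theta (mm B x v) - Chebyshev.theta A) ≤ 3 * (x * A^(-0.4:ℝ)) := by
    have i1 : IntervalIntegrable (fun v : ℝ => 1.2 * x * v^(-1.4:ℝ)) volume A B :=
      (intervalIntegral.intervalIntegrable_rpow (Or.inr hnot)).const_mul _
    have i0 : IntervalIntegrable (fun v : ℝ => 0.6 * v^(-0.4:ℝ) * (Chebyshev.theta (mm B x v) - Chebyshev.theta A)) volume A B := by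
      refine IntervalIntegrable.continuousOn_mul ((theta_mm_ii hA0 hAB hx0).sub (by simp)) ?_
      refine continuousOn_const.mul (ContinuousOn.rpow_const continuousOn_id fun v hv => Or.inl ?_)
      rintro rfl; exact hnot hv
    have := intervalIntegral.integral_mono_on hAB i0 i1 (fun v hv => by
      have hv0 : 0 < v := by linarith [hv.1]
      have hm : mm B x v ≤ x / v := min_le_right _ _
      have hm0 := le_mm hA0 hAB hABx hv.1 hv.2
      have u1 := theta_two (show 0 ≤ mm B x v by linarith)
      have u2 := Chebyshev.theta_nonneg A
      have e : v^(-0.4:ℝ) = v^(-1.4:ℝ) * v := by rw [← Real.rpow_add_one hv0.ne']; norm_num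
      rw [e]
      calc _ ≤ 0.6 * (v^(-1.4:ℝ) * v) * (2 * (x / v)) := by gcongr; linarith
        _ = _ := by field_simp; norm_num)
    refine this.trans ?_
    rw [intervalIntegral.integral_const_mul, integral_rpow (Or.inr ⟨by norm_num, hnot⟩)]
    have hPB : 0 < B^(-0.4:ℝ) := by positivity
    norm_num at hPB ⊢
    have := mul_pos hx0 hPB
    linarith
  have t3 : ∫ v in A..B, mm B x v ^ (0.6:ℝ) ≤ 2.5 * (x * A^(-0.4:ℝ)) := by
    have i1 : IntervalIntegrable (fun v : ℝ => x^(0.6:ℝ) * v^(-0.6:ℝ)) volume A B :=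
      (intervalIntegral.intervalIntegrable_rpow (Or.inr hnot)).const_mul _
    have := intervalIntegral.integral_mono_on hAB (mm_rpow_ii (B := B) hA0 hAB hx0 (by norm_num : (0:ℝ) ≤ 0.6)) i1 (fun v hv => by
      have hv0 : 0 < v := by linarith [hv.1]
      have hm : mm B x v ≤ x / v := min_le_right _ _
      have hm0 := le_mm hA0 hAB hABx hv.1 hv.2
      calc mm B x v ^ (0.6:ℝ) ≤ (x/v)^(0.6:ℝ) := by gcongr; linarith
        _ = _ := by rw [Real.div_rpow hx0.le hv0.le, Real.rpow_neg hv0.le, div_eq_mul_inv])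
    refine this.trans ?_
    rw [intervalIntegral.integral_const_mul, integral_rpow (Or.inl (by norm_num))]
    have hBx : B^(0.4:ℝ) ≤ x^(0.4:ℝ) * A^(-0.4:ℝ) := by
      rw [Real.rpow_neg hA0.le, ← div_eq_mul_inv, ← Real.div_rpow hx0.le hA0.le]
      gcongr
      rw [le_div_iff₀ hA0]; linarith
    have hA4 : 0 < A^(0.4:ℝ) := by positivity
    have ex : x^(0.6:ℝ) * x^(0.4:ℝ) = x := by rw [← Real.rpow_add hx0]; norm_num
    calc _ = x^(0.6:ℝ) * ((B^(0.4:ℝ) - A^(0.4:ℝ)) / 0.4) := by norm_num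
      _ ≤ x^(0.6:ℝ) * ((x^(0.4:ℝ) * A^(-0.4:ℝ)) / 0.4) := by gcongr; linarith
      _ = 2.5 * ((x^(0.6:ℝ) * x^(0.4:ℝ)) * A^(-0.4:ℝ)) := by ring
      _ = _ := by rw [ex]
  have := mul_le_mul_of_nonneg_left (add_le_add (add_le_add t1 t2) t3) (show 0 ≤ 2 * K by linarith)
  linarith

end

section

open Set MeasureTheory Filter Topology

lemma arith_large {K A x X Lm W E : ℝ} (hK : 1 ≤ K) (hA : 1 ≤ A) (hAX : A ≤ X) (hx0 : 0 < x) (hL : 1 ≤ Lm)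
    (hW0 : 0 ≤ W) (hE : E ≤ 15 * K * (x * A^(-0.4:ℝ)))
    (hW : 64 * K ≤ Real.log 2 * X^(0.4:ℝ) → x * Real.log 2 ^ 3 / (8192 * Lm) ≤ W) :
    E ≤ W + 20000000 * K^2 * (x * A^(-0.5:ℝ)) * Lm^2 := by
  have hA0 : 0 < A := by linarith
  have hl2 : 1/2 < Real.log 2 := by have := Real.log_two_gt_d9; linarith
  have e : A^(-0.4:ℝ) = A^(-0.5:ℝ) * A^(0.1:ℝ) := by rw [← Real.rpow_add hA0]; norm_num
  have hA1 : A^(0.1:ℝ) ≤ A^(0.4:ℝ) := Real.rpow_le_rpow_of_exponent_le hA (by norm_num)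
  have hAX4 : A^(0.4:ℝ) ≤ X^(0.4:ℝ) := by gcongr
  set P := x * A^(-0.5:ℝ) with hP
  have hP0 : 0 < P := by positivity
  have hL2 : Lm ≤ Lm^2 := by nlinarith
  -- enough: A^0.1 bounded
  have main : A^(0.1:ℝ) ≤ 983040 * K * Lm → E ≤ W + 20000000 * K^2 * P * Lm^2 := by
    intro h
    calc E ≤ 15 * K * (P * A^(0.1:ℝ)) := by rw [hP, mul_assoc x, ← e]; exact hE
      _ ≤ 15 * K * (P * (983040 * K * Lm^2)) := by
        gcongr
        calc _ ≤ 983040 * K * Lm := h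
          _ ≤ _ := by gcongr
      _ = 14745600 * (K^2 * P * Lm^2) := by ring
      _ ≤ 20000000 * (K^2 * P * Lm^2) := by gcongr; norm_num
      _ ≤ W + 20000000 * K^2 * P * Lm^2 := by nlinarith
  by_cases hc : 64 * K ≤ Real.log 2 * X^(0.4:ℝ)
  · have hW' := hW hc
    by_cases h2 : E ≤ W
    · have : 0 ≤ 20000000 * K^2 * P * Lm^2 := by positivity
      linarith
    · push Not at h2
      apply main
      have h3 : x * Real.log 2 ^ 3 / (8192 * Lm) ≤ 15 * K * (x * A^(-0.4:ℝ)) := by linarith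
      have h4 : A^(-0.4:ℝ) * A^(0.4:ℝ) = 1 := by rw [← Real.rpow_add hA0]; norm_num
      rw [div_le_iff₀ (by positivity)] at h3
      have h5 : Real.log 2 ^ 3 ≤ 15 * K * A^(-0.4:ℝ) * (8192 * Lm) := by
        have : x * Real.log 2 ^ 3 ≤ x * (15 * K * A^(-0.4:ℝ) * (8192 * Lm)) := by linarith
        exact le_of_mul_le_mul_left this hx0
      have h6 : (1/8 : ℝ) ≤ Real.log 2 ^ 3 := by
        calc (1/8:ℝ) = (1/2)^3 := by norm_num
          _ ≤ _ := by gcongr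
      have h7 : (1/8:ℝ) * A^(0.4:ℝ) ≤ 122880 * K * Lm := by
        calc (1/8:ℝ) * A^(0.4:ℝ) ≤ (15 * K * A^(-0.4:ℝ) * (8192 * Lm)) * A^(0.4:ℝ) := by
              gcongr; linarith
          _ = 122880 * K * Lm * (A^(-0.4:ℝ) * A^(0.4:ℝ)) := by ring
          _ = _ := by rw [h4, mul_one]
      linarith
  · push Not at hc
    apply main
    have h1 : X^(0.4:ℝ) ≤ 128 * K := by
      have : 0 ≤ X^(0.4:ℝ) := by have : 0 ≤ X := by linarith
                                 positivity
      nlinarith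
    nlinarith

lemma arith_small {K X x Lm W E η : ℝ} (hK : 1 ≤ K) (hX : 1 ≤ X) (hx : X * X = x) (hL : 1 ≤ Lm)
    (hη : 0 < η) (hW0 : 0 ≤ W) (hE : E ≤ 8 * K * X^(0.6:ℝ) * (2 * X * η + 2 * K * X^(0.6:ℝ)))
    (hW : 64 * K ≤ η * X^(0.4:ℝ) → x * η ^ 3 / (8192 * Lm) ≤ W) :
    E ≤ W + 20000000 * K^2 * X^(1.5:ℝ) * Lm^2 := by
  have hX0 : 0 < X := by linarith
  have e1 : X^(0.6:ℝ) * X = X^(1.6:ℝ) := by rw [← Real.rpow_add_one hX0.ne']; norm_num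
  have e2 : X^(0.6:ℝ) * X^(0.6:ℝ) = X^(1.2:ℝ) := by rw [← Real.rpow_add hX0]; norm_num
  have e3 : X^(1.6:ℝ) = X^(1.5:ℝ) * X^(0.1:ℝ) := by rw [← Real.rpow_add hX0]; norm_num
  have l1 : X^(1.2:ℝ) ≤ X^(1.5:ℝ) := Real.rpow_le_rpow_of_exponent_le hX (by norm_num)
  have l2 : X^(0.1:ℝ) ≤ X^(0.4:ℝ) := Real.rpow_le_rpow_of_exponent_le hX (by norm_num)
  have l3 : X^(0.1:ℝ) * X^(0.1:ℝ) ≤ X^(0.4:ℝ) := by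
    rw [← Real.rpow_add hX0]; exact Real.rpow_le_rpow_of_exponent_le hX (by norm_num)
  have hE2 : E ≤ 16 * K * X^(1.6:ℝ) * η + 16 * K^2 * X^(1.2:ℝ) := by
    rw [← e1, ← e2]; linarith
  have hL2 : Lm ≤ Lm^2 := by nlinarith
  have hP0 : 0 < X^(1.5:ℝ) := by positivity
  set P := X^(1.5:ℝ)
  have b1 : 16 * K^2 * X^(1.2:ℝ) ≤ 16 * (K^2 * P * Lm^2) := by
    calc 16 * K^2 * X^(1.2:ℝ) ≤ 16 * K^2 * P := by gcongr
      _ = 16 * (K^2 * P * 1) := by ring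
      _ ≤ _ := by gcongr; linarith
  have hpos : 0 ≤ K^2 * P * Lm^2 := by positivity
  have main : X^(0.1:ℝ) * η ≤ 131072 * K * Lm → E ≤ W + 20000000 * K^2 * P * Lm^2 := by
    intro h
    have : 16 * K * X^(1.6:ℝ) * η ≤ 2097152 * (K^2 * P * Lm^2) := by
      calc 16 * K * X^(1.6:ℝ) * η = 16 * K * P * (X^(0.1:ℝ) * η) := by rw [e3]; ring
        _ ≤ 16 * K * P * (131072 * K * Lm^2) := by
          refine mul_le_mul_of_nonneg_left (h.trans ?_) (by positivity)
          exact mul_le_mul_of_nonneg_left hL2 (by positivity)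
        _ = _ := by ring
    nlinarith
  by_cases hc : 64 * K ≤ η * X^(0.4:ℝ)
  · have hW' := hW hc
    by_cases h2 : 16 * K * X^(1.6:ℝ) * η ≤ W
    · nlinarith
    · push Not at h2
      apply main
      have h3 : x * η ^ 3 / (8192 * Lm) ≤ 16 * K * X^(1.6:ℝ) * η := by linarith
      rw [div_le_iff₀ (by positivity)] at h3
      have e4 : x = X^(1.6:ℝ) * X^(0.4:ℝ) := by
        rw [← Real.rpow_add hX0, ← hx, ← sq, ← Real.rpow_natCast]; norm_num
      have hp6 : 0 < X^(1.6:ℝ) * η := by positivity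
      have h4 : X^(0.4:ℝ) * η^2 ≤ 131072 * K * Lm := by
        have : (X^(1.6:ℝ) * η) * (X^(0.4:ℝ) * η^2) ≤ (X^(1.6:ℝ) * η) * (131072 * K * Lm) := by
          calc _ = x * η^3 := by rw [e4]; ring
            _ ≤ _ := h3
            _ = _ := by ring
        exact le_of_mul_le_mul_left this hp6
      have h5 : (X^(0.1:ℝ) * η)^2 ≤ (131072 * K * Lm)^2 := by
        have hc2 : 1 ≤ 131072 * K * Lm := by nlinarith
        calc (X^(0.1:ℝ) * η)^2 = (X^(0.1:ℝ) * X^(0.1:ℝ)) * η^2 := by ring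
          _ ≤ X^(0.4:ℝ) * η^2 := by gcongr
          _ ≤ 131072 * K * Lm := h4
          _ ≤ _ := by nlinarith
      exact le_of_sq_le_sq h5 (by positivity)
  · push Not at hc
    apply main
    nlinarith

lemma key {K : ℝ} (hK : 1 ≤ K)
    (hθ : ∀ t : ℝ, 1 ≤ t → |Chebyshev.theta t - t| ≤ K * t^(0.6:ℝ))
    {r x A B X I : ℝ} (hr : 1 < r) (hA : 2657 ≤ A) (hAr : A * A * r = x) (hX0 : 0 < X) (hX : X * X = x)
    (hXB : X ≤ B) (hABx : A * B ≤ x) (hI : I = ∫ v in A..B, (mm B x v - A)) :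
    (QQ A B x).card * Real.log A ^ 2 ≤ I + 20000000 * K^2 * (x^((3:ℝ)/4) * r^((1:ℝ)/4)) * Real.log A ^ 2 ∧
    I ≤ (QQ A B x).card * Real.log B ^ 2 + 20000000 * K^2 * (x^((3:ℝ)/4) * r^((1:ℝ)/4)) * Real.log B ^ 2 := by
  have hA0 : 0 < A := by linarith
  have hAX : A ≤ X := by
    have : A * A ≤ X * X := by rw [hX, ← hAr]; nlinarith
    nlinarith
  have hAB : A ≤ B := hAX.trans hXB
  have hB0 : 0 < B := by linarith
  have hx0 : 0 < x := by rw [← hX]; positivity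
  have hlA : 1 ≤ Real.log A := by
    rw [Real.le_log_iff_exp_le hA0]
    have := Real.exp_one_lt_d9; linarith
  have hlB : 1 ≤ Real.log B := hlA.trans (Real.log_le_log hA0 hAB)
  have TL := TT_lower (x := x) (show 1 ≤ A by linarith) hB0.le
  have TU := TT_upper (x := x) (show 1 ≤ A by linarith) hB0.le
  have hlX : Real.log X = Real.log A + Real.log r / 2 := by
    have h1 : Real.log (X * X) = Real.log (A * A * r) := by rw [hX, hAr]
    rw [Real.log_mul hX0.ne' hX0.ne', Real.log_mul (by positivity) (by positivity),
      Real.log_mul hA0.ne' hA0.ne'] at h1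
    linarith
  have hlr : 0 < Real.log r := Real.log_pos hr
  have hAe : ∀ η : ℝ, η ≤ Real.log r → A ≤ X * Real.exp (-(η/2)) := by
    intro η h
    rw [← Real.log_le_log_iff hA0 (by positivity), Real.log_mul hX0.ne' (Real.exp_pos _).ne', Real.log_exp]
    linarith
  rcases le_total r 2 with h2 | h2
  · have err := err_small hK hθ (by linarith) hAB hABx
    rw [← hI] at err
    have hη1 : Real.log r ≤ 1 := by
      have := Real.log_le_sub_one_of_pos (show 0 < r by linarith); linarith
    have hBr : B ≤ A * r := by
      have : A * B ≤ A * (A * r) := by linarith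
      exact le_of_mul_le_mul_left this hA0
    have hB2 : B ≤ 2 * X := by nlinarith
    have hrl : r - 1 ≤ 2 * Real.log r := by
      have h3 := Real.one_sub_inv_le_log_of_pos (show 0 < r by linarith)
      have h4 : r * (1 - r⁻¹) = r - 1 := by field_simp
      nlinarith
    have hBA : B - A ≤ 2 * X * Real.log r := by nlinarith
    have hB6 : B^(0.6:ℝ) ≤ 2 * X^(0.6:ℝ) := by
      calc B^(0.6:ℝ) ≤ (2*X)^(0.6:ℝ) := by gcongr
        _ = 2^(0.6:ℝ) * X^(0.6:ℝ) := Real.mul_rpow (by norm_num) hX0.le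
        _ ≤ 2^(1:ℝ) * X^(0.6:ℝ) := by
          gcongr
          · norm_num
          · norm_num
        _ = _ := by simp
    have hE : 4 * K * B^(0.6:ℝ) * ((B - A) + K * B^(0.6:ℝ)) ≤
        8 * K * X^(0.6:ℝ) * (2 * X * Real.log r + 2 * K * X^(0.6:ℝ)) := by
      calc _ ≤ 4 * K * (2 * X^(0.6:ℝ)) * (2 * X * Real.log r + K * (2 * X^(0.6:ℝ))) := by
            gcongr
        _ = _ := by ring
    have htol : X^(1.5:ℝ) ≤ x^((3:ℝ)/4) * r^((1:ℝ)/4) := by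
      have e : x^((3:ℝ)/4) = X^(1.5:ℝ) := by
        rw [← hX, ← sq, ← Real.rpow_natCast, ← Real.rpow_mul hX0.le]; norm_num
      rw [e]
      have : 1 ≤ r^((1:ℝ)/4) := Real.one_le_rpow hr.le (by norm_num)
      have : 0 < X^(1.5:ℝ) := by positivity
      nlinarith
    rw [abs_le] at err
    constructor
    · have := arith_small (E := TT A B x - I) (W := TT A B x - (QQ A B x).card * Real.log A ^ 2) hK
        (show 1 ≤ X by linarith) hX hlA hlr (by linarith) (by linarith [err.2]) (fun hc => by
          have := gain_up (B := B) hK hθ (by linarith) hX hXB hlr hη1 (hAe _ le_rfl) hc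
          linarith)
      have h5 : 20000000 * K^2 * X^(1.5:ℝ) * Real.log A ^ 2 ≤
        20000000 * K^2 * (x^((3:ℝ)/4) * r^((1:ℝ)/4)) * Real.log A ^ 2 := by gcongr
      linarith
    · have := arith_small (E := I - TT A B x) (W := (QQ A B x).card * Real.log B ^ 2 - TT A B x) hK
        (show 1 ≤ X by linarith) hX hlB hlr (by linarith) (by linarith [err.1]) (fun hc => by
          have := gain_lo (B := B) hK hθ (by linarith) hX hXB hlr hη1 (hAe _ le_rfl) hc
          linarith)
      have h5 : 20000000 * K^2 * X^(1.5:ℝ) * Real.log B ^ 2 ≤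
        20000000 * K^2 * (x^((3:ℝ)/4) * r^((1:ℝ)/4)) * Real.log B ^ 2 := by gcongr
      linarith
  · have err := err_large hK hθ (by linarith) hAB hABx
    rw [← hI] at err
    have hl2 : 0 < Real.log 2 := Real.log_pos (by norm_num)
    have hl21 : Real.log 2 ≤ 1 := by have := Real.log_two_lt_d9; linarith
    have hlr2 : Real.log 2 ≤ Real.log r := Real.log_le_log (by norm_num) h2
    have htol : x^((3:ℝ)/4) * r^((1:ℝ)/4) = x * A^(-0.5:ℝ) := by
      have hr0 : 0 < r := by linarith
      rw [← hAr, Real.mul_rpow (by positivity) hr0.le, ← sq, ← Real.rpow_natCast, ← Real.rpow_mul hA0.le,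
        mul_assoc, ← Real.rpow_add hr0]
      have : A ^ ((2:ℕ):ℝ) * r * A^(-0.5:ℝ) = (A ^ ((2:ℕ):ℝ) * A^(-0.5:ℝ)) * r := by ring
      rw [this, ← Real.rpow_add hA0]
      norm_num
    rw [htol]
    rw [abs_le] at err
    constructor
    · have := arith_large (E := TT A B x - I) (W := TT A B x - (QQ A B x).card * Real.log A ^ 2) hK
        (show 1 ≤ A by linarith) hAX hx0 hlA (by linarith) (by linarith [err.2]) (fun hc => by
          have := gain_up (B := B) hK hθ (by linarith) hX hXB hl2 hl21 (hAe _ hlr2) hc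
          linarith)
      linarith
    · have := arith_large (E := I - TT A B x) (W := (QQ A B x).card * Real.log B ^ 2 - TT A B x) hK
        (show 1 ≤ A by linarith) hAX hx0 hlB (by linarith) (by linarith [err.1]) (fun hc => by
          have := gain_lo (B := B) hK hθ (by linarith) hX hXB hl2 hl21 (hAe _ hlr2) hc
          linarith)
      linarith

end

lemma pick {N I a b T L M : ℝ} (ha : 0 < a) (hab : a ≤ b) (hT : 0 ≤ T) (hL : 0 < L)
    (h1 : N * a^2 ≤ I + T * a^2) (h2 : I ≤ N * b^2 + T * b^2)
    (hM : M = I / (L^2/4)) :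
    ∃ t ∈ Set.Icc ((L/(2*b))^2) ((L/(2*a))^2), |N - t * M| ≤ T := by
  have hb : 0 < b := by linarith
  have hle : (L/(2*b))^2 ≤ (L/(2*a))^2 := by gcongr
  have eb : (L/(2*b))^2 * M = I / b^2 := by rw [hM]; field_simp; ring
  have ea : (L/(2*a))^2 * M = I / a^2 := by rw [hM]; field_simp; ring
  have h1' : N - T ≤ I / a^2 := by rw [le_div_iff₀ (by positivity)]; linarith
  have h2' : I / b^2 ≤ N + T := by rw [div_le_iff₀ (by positivity)]; linarith
  rcases le_or_gt N (I / b^2) with c1 | c1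
  · refine ⟨_, ⟨le_rfl, hle⟩, ?_⟩
    rw [eb, abs_le]; constructor <;> linarith
  rcases le_or_gt (I / a^2) N with c2 | c2
  · refine ⟨_, ⟨hle, le_rfl⟩, ?_⟩
    rw [ea, abs_le]; constructor <;> linarith
  have hM0 : 0 < M := by
    by_contra h
    push Not at h
    have := mul_le_mul_of_nonpos_right hle h
    linarith
  refine ⟨N / M, ⟨?_, ?_⟩, ?_⟩
  · rw [le_div_iff₀ hM0]; linarith
  · rw [div_le_iff₀ hM0]; linarith
  · rw [div_mul_cancel₀ _ hM0.ne', sub_self, abs_zero]; exact hT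

/-- Theorem 4.4 of the paper (count of fixed-bound RSA integers, under RH). -/
theorem NFIX_asymptotics (hRH : RiemannHypothesis) :
    ∃ C : ℝ, 0 < C ∧ ∀ r x σ : ℝ, σ ∈ Set.Icc (0 : ℝ) 1 → 1 < r →
      Real.log r < Real.log x → (2657 : ℝ) ≤ Real.sqrt (x / r) →
      ∃ atil ∈ Set.Icc ((1 - σ * Real.log r / (Real.log x + σ * Real.log r)) ^ 2)
                       ((1 + Real.log r / (Real.log x - Real.log r)) ^ 2),
        |(NFIX r σ x : ℝ)
            - atil * (4 * x / (Real.log x) ^ 2)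
              * (σ * Real.log r + 1 - 2 * r ^ (-(1 - σ) / 2) + 1 / r)|
          ≤ C * x ^ ((3 : ℝ) / 4) * r ^ ((1 : ℝ) / 4) := by
  obtain ⟨K, hK, hθ⟩ := theta_bound hRH
  refine ⟨20000000 * K^2, by positivity, ?_⟩
  intro r x σ hσ hr hlog hsq
  obtain ⟨hσ0, hσ1⟩ := hσ
  have hr0 : 0 < r := by linarith
  have hxr : 0 < x / r := by
    by_contra h
    push Not at h
    rw [Real.sqrt_eq_zero_of_nonpos h] at hsq
    linarith
  have hx0 : 0 < x := by
    have := mul_pos hxr hr0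
    rwa [div_mul_cancel₀ _ hr0.ne'] at this
  have hlr : 0 < Real.log r := Real.log_pos hr
  have hlx : 0 < Real.log x := by linarith
  have hrs : 0 < r^σ := by positivity
  have hrs1 : 1 ≤ r^σ := Real.one_le_rpow hr.le hσ0
  obtain ⟨A, hA⟩ : ∃ A, A = Real.sqrt (x / r) := ⟨_, rfl⟩
  obtain ⟨B, hB⟩ : ∃ B, B = Real.sqrt (r ^ σ * x) := ⟨_, rfl⟩
  have hcard : NFIX r σ x = (QQ A B x).card := by
    unfold NFIX
    rw [← hA, ← hB]
    apply Nat.subtype_card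
    intro pq
    rw [mem_QQ (by rw [hA]; positivity) (by rw [hB]; positivity)]
    tauto
  rw [← hA] at hsq
  have hAA : A * A = x / r := by rw [hA, Real.mul_self_sqrt hxr.le]
  have hBB : B * B = r^σ * x := by rw [hB, Real.mul_self_sqrt (by positivity)]
  have hA0 : 0 < A := by linarith
  have hB0 : 0 < B := by rw [hB]; positivity
  have hAr : A * A * r = x := by rw [hAA, div_mul_cancel₀ _ hr0.ne']
  have hxx : Real.sqrt x * Real.sqrt x = x := Real.mul_self_sqrt hx0.le
  have hxB : x ≤ B * B := by rw [hBB]; nlinarith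
  have hXB : Real.sqrt x ≤ B := by
    rw [hB]; exact Real.sqrt_le_sqrt (by nlinarith)
  have hlA : Real.log A = (Real.log x - Real.log r) / 2 := by
    rw [hA, Real.log_sqrt hxr.le, Real.log_div hx0.ne' hr0.ne']
  have hlB : Real.log B = (Real.log x + σ * Real.log r) / 2 := by
    rw [hB, Real.log_sqrt (by positivity), Real.log_mul hrs.ne' hx0.ne', Real.log_rpow hr0]; ring
  have hAB : A * B = x * r ^ (-(1 - σ) / 2) := by
    apply Real.log_injOn_pos (Set.mem_Ioi.2 (by positivity)) (Set.mem_Ioi.2 (by positivity))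
    rw [Real.log_mul hA0.ne' hB0.ne', Real.log_mul hx0.ne' (by positivity), Real.log_rpow hr0, hlA, hlB]
    ring
  have hABx : A * B ≤ x := by
    rw [hAB]
    have : r ^ (-(1 - σ) / 2) ≤ 1 := Real.rpow_le_one_of_one_le_of_nonpos hr.le (by linarith)
    nlinarith
  have hlab : Real.log A ≤ Real.log B := by
    rw [hlA, hlB]
    have := mul_nonneg hσ0 hlr.le
    linarith
  have hAB' : A ≤ B := (Real.log_le_log_iff hA0 hB0).1 hlab
  obtain ⟨k1, k2⟩ := key hK hθ hr hsq hAr (Real.sqrt_pos.2 hx0) hxx hXB hABx rfl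
  have hla : 0 < Real.log A := by rw [hlA]; linarith
  obtain ⟨t, ht, h⟩ := pick (M := (4 * x / (Real.log x) ^ 2)
      * (σ * Real.log r + 1 - 2 * r ^ (-(1 - σ) / 2) + 1 / r)) hla hlab (by positivity) hlx k1 k2 (by
    rw [area_eq hA0 hAB' hABx hxB, hAB, hAA, hBB, mul_div_cancel_right₀ _ hx0.ne', Real.log_rpow hr0]
    field_simp
    ring)
  refine ⟨t, ?_, ?_⟩
  · convert ht using 2
    · rw [hlB]
      have : Real.log x + σ * Real.log r ≠ 0 := by
        have := mul_nonneg hσ0 hlr.le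
        linarith
      congr 1
      field_simp
      ring
    · rw [hlA]
      have : Real.log x - Real.log r ≠ 0 := by linarith
      congr 1
      field_simp
      ring
  · rw [hcard, mul_assoc t, mul_assoc (20000000 * K^2)]
    exact h
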